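/- arXiv:0802.1319 — 4 statements merged into one kernel-verified Lean document; each statement's English description precedes it below -/
import Mathlib

section
/- Corollary for the bounded normal shift model: let c < ∞ and let f_μ be the density of N(μ, 1). Then there exists a constant κ depending only on c such that for every n and every μ_1,…,μ_n with |μ_i| ≤ c for all i, E‖Δ^S − Δ^{PI}‖² ≤ κ and r^S_n − r^{PI}_n ≤ κ. -/
/-!
It is enough to show `E (δ^S(Y_i) - E(M_i | Y))² ≤ κ / n` for each coordinate
`i`; summing over `i` gives the first bound. Since `M_i - E(M_i | Y)` is orthogonal to functions of
`Y`, the excess risk is the same number, which gives the second bound (`coord_le`).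

**Duality.** The bound follows from
`2 E ψ(Y) (δ^S(Y_i) - M_i) ≤ κ / n + E ψ(Y)²` for all bounded `ψ` (`dual_le`), applied with
`ψ(Y) = δ^S(Y_i) - E(M_i | Y)`.

**Resampling.** The law of `π` is unchanged if `π` is replaced by `π ∘ (i l)` with `l` uniform.
Fix `π`, put `ν = μ ∘ π`, and let `F_l` be the joint density of `Y` after the swap. With
`p_l = f_{ν_l}(y_i)`, `r_l = (f_{ν_i} / f_{ν_l})(y_l)` and `B = ∏_{k ≠ i} f_{ν_k}(y_k)` one has
`F_l = B p_l r_l` (`swapDen_eq`). The coefficients `a_l = (δ^S(y_i) - ν_l) p_l` sum to zero over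
`l`, by the very definition of `δ^S`, so
`N = ∑ (δ^S(y_i) - ν_l) F_l = B ∑ a_l (r_l - 1)`. Under the density `B` of the coordinates other
than `i`, this is a sum of independent centred terms, so it is of smaller order than
`D = ∑ F_l = B ∑ p_l r_l`.

**Second moment.** Pointwise `2 N ψ ≤ N² / D + ψ² D`, and by Cauchy–Schwarz
`1 / ∑ p_l r_l ≤ (∑ p_m / r_m) / (∑ p_k)²`. This replaces `N² / D` by a finite sum of products of
functions of one coordinate each (`majorant`, `pointwise_le`). Integrated over `y`, the terms with
`l ≠ l'` vanish (`integral_off_diag`), and the terms with `l = l'` are at most `exp (8 c²)` times a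
one-dimensional integral (`integral_diag_le`), by explicit Gaussian moments of likelihood ratios.
These one-dimensional integrals add up to at most `(2 c)²` times the integral of an envelope
of the densities `f_μ`, `|μ| ≤ c`, which does not depend on `n` (`integral_majorant_le`). Averaging over
the `n` values of `l` produces the factor `1 / n`.
-/

open MeasureTheory ProbabilityTheory ENNReal

noncomputable section

instance (n : ℕ) : MeasurableSpace (Equiv.Perm (Fin n)) := ⊤

/-- product measure on `Fin n → 𝓨` with `i`-th coordinate having density `f i` w.r.t. `ν`. -/
def prodDens {𝓨 : Type*} [MeasurableSpace 𝓨] (ν : Measure 𝓨) {n : ℕ}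
    (f : Fin n → 𝓨 → ℝ) : Measure (Fin n → 𝓨) :=
  Measure.pi fun i => ν.withDensity fun y => ENNReal.ofReal (f i y)

/-- the random-permutation Bayesian model: `π` uniform on permutations; given `π`,
the observations are independent with `Y i ∼ f (π i)`. -/
def bayesP {𝓨 : Type*} [MeasurableSpace 𝓨] (ν : Measure 𝓨) {n : ℕ}
    (f : Fin n → 𝓨 → ℝ) : Measure (Equiv.Perm (Fin n) × (Fin n → 𝓨)) :=
  ((Nat.factorial n : ℝ≥0∞))⁻¹ •
    ∑ π : Equiv.Perm (Fin n), (Measure.dirac π).prod (prodDens ν fun i => f (π i))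

/-- `M i = μ_{π(i)}` -/
def Mpar {𝓨 : Type*} {n : ℕ} (μs : Fin n → ℝ) (i : Fin n)
    (ω : Equiv.Perm (Fin n) × (Fin n → 𝓨)) : ℝ := μs (ω.1 i)

/-- the σ-algebra generated by `Y = (Y_1, …, Y_n)` -/
def sigmaY (𝓨 : Type*) [MeasurableSpace 𝓨] (n : ℕ) :
    MeasurableSpace (Equiv.Perm (Fin n) × (Fin n → 𝓨)) :=
  MeasurableSpace.comap Prod.snd inferInstance

/-- the σ-algebra generated by `Y_i` alone -/
def sigmaYi (𝓨 : Type*) [MeasurableSpace 𝓨] {n : ℕ} (i : Fin n) :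
    MeasurableSpace (Equiv.Perm (Fin n) × (Fin n → 𝓨)) :=
  MeasurableSpace.comap (fun ω => ω.2 i) inferInstance

/-- the oracle simple symmetric rule `δ^S(y) = Σ_j μ_j f_j(y) / Σ_j f_j(y)` -/
def deltaS {𝓨 : Type*} {n : ℕ} (μs : Fin n → ℝ) (f : Fin n → 𝓨 → ℝ) (y : 𝓨) : ℝ :=
  (∑ j, μs j * f j y) / (∑ j, f j y)

/-- the `N(μ,1)` density with respect to Lebesgue measure -/
def gaussDen (μ : ℝ) (y : ℝ) : ℝ :=
  (Real.sqrt (2 * Real.pi))⁻¹ * Real.exp (-(y - μ) ^ 2 / 2)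

/-! ### Gaussian densities and likelihood ratios -/

theorem gaussDen_eq (μ : ℝ) : gaussDen μ = gaussianPDFReal μ 1 := by
  funext y; simp [gaussDen, gaussianPDFReal]

theorem gaussDen_pos (μ y : ℝ) : 0 < gaussDen μ y := by
  rw [gaussDen_eq]; exact gaussianPDFReal_pos _ _ _ (by norm_num)

theorem gaussDen_integrable (μ : ℝ) : Integrable (gaussDen μ) := by
  rw [gaussDen_eq]; exact integrable_gaussianPDFReal _ _

theorem gaussDen_integral (μ : ℝ) : ∫ y, gaussDen μ y = 1 := by
  rw [gaussDen_eq]; exact integral_gaussianPDFReal_eq_one _ (by norm_num)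

@[fun_prop]
theorem gaussDen_measurable (μ : ℝ) : Measurable (gaussDen μ) := by
  rw [gaussDen_eq]; exact measurable_gaussianPDFReal _ _

/-- Squaring a Gaussian density is again Gaussian; this identity evaluates every moment of a
likelihood ratio used below. -/
theorem gaussDen_sq (a b y : ℝ) :
    gaussDen a y ^ 2 = Real.exp ((a - b) ^ 2) * (gaussDen b y * gaussDen (2 * a - b) y) := by
  have h : Real.exp (-(y - a) ^ 2 / 2) ^ 2 = Real.exp ((a - b) ^ 2) *
      (Real.exp (-(y - b) ^ 2 / 2) * Real.exp (-(y - (2 * a - b)) ^ 2 / 2)) := by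
    rw [← Real.exp_nat_mul, ← Real.exp_add, ← Real.exp_add]
    congr 1; push_cast; ring
  unfold gaussDen
  rw [mul_pow, h]; ring

/-- An integrable envelope for all `N(μ,1)` densities with `|μ| ≤ c`. -/
theorem gaussDen_le (c μ y : ℝ) (h : |μ| ≤ c) :
    gaussDen μ y ≤ Real.exp (c ^ 2 / 2) * (gaussDen c y + gaussDen (-c) y) := by
  have key : Real.exp (-(y - μ) ^ 2 / 2) ≤ Real.exp (c ^ 2 / 2) *
      (Real.exp (-(y - c) ^ 2 / 2) + Real.exp (-(y - -c) ^ 2 / 2)) := by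
    rw [mul_add, ← Real.exp_add, ← Real.exp_add]
    obtain ⟨h1, h2⟩ := abs_le.1 h
    rcases le_total 0 y with hy | hy
    · refine le_trans (Real.exp_le_exp.2 ?_) (le_add_of_nonneg_right (Real.exp_pos _).le)
      nlinarith [mul_le_mul_of_nonneg_left h2 hy, sq_nonneg μ]
    · refine le_trans (Real.exp_le_exp.2 ?_) (le_add_of_nonneg_left (Real.exp_pos _).le)
      nlinarith [mul_le_mul_of_nonpos_left h1 hy, sq_nonneg μ]
  unfold gaussDen
  have := mul_le_mul_of_nonneg_left key (inv_nonneg.2 (Real.sqrt_nonneg (2 * Real.pi)))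
  nlinarith

/-- The likelihood ratio `f_a / f_b`. -/
def lr (a b y : ℝ) : ℝ := gaussDen a y / gaussDen b y

theorem lr_pos (a b y : ℝ) : 0 < lr a b y := div_pos (gaussDen_pos _ _) (gaussDen_pos _ _)

theorem lr_mul_lr (a b y : ℝ) : lr a b y * lr b a y = 1 := by
  have := gaussDen_pos a y
  have := gaussDen_pos b y
  unfold lr; field_simp

theorem lr_self (a y : ℝ) : lr a a y = 1 := div_self (gaussDen_pos _ _).ne'

@[fun_prop]
theorem lr_measurable (a b : ℝ) : Measurable (lr a b) :=
  (gaussDen_measurable a).div (gaussDen_measurable b)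

theorem den_mul_lr (a b y : ℝ) : gaussDen b y * lr a b y = gaussDen a y := by
  have := gaussDen_pos b y
  unfold lr; field_simp

theorem den_mul_lr_sq (a b y : ℝ) :
    gaussDen b y * lr a b y ^ 2 = Real.exp ((a - b) ^ 2) * gaussDen (2 * a - b) y := by
  have := gaussDen_pos b y
  unfold lr
  rw [div_pow, gaussDen_sq a b]; field_simp

theorem den_mul_lr_inv (a b y : ℝ) :
    gaussDen b y * lr b a y = Real.exp ((b - a) ^ 2) * gaussDen (2 * b - a) y := by
  rw [← den_mul_lr_sq b a, ← den_mul_lr b a]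
  ring

/-- One coordinate of the product integrand: the density `f_b` times some of the factors
`r - 1`, `r - 1`, `1 / r`, where `r = f_a / f_b`. -/
def tilt (a b : ℝ) (p q s : Prop) [Decidable p] [Decidable q] [Decidable s] (y : ℝ) : ℝ :=
  gaussDen b y * (if p then lr a b y - 1 else 1) * (if q then lr a b y - 1 else 1)
    * (if s then lr b a y else 1)

section
variable (a b : ℝ) (p q s : Prop) [Decidable p] [Decidable q] [Decidable s]

/-- `tilt` is a combination of Gaussian densities, so its integral is the sum of the coefficients:
`0` for a lone factor `r - 1`, `1` without any factor, and at most `exp ((a - b)²)` when the factor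
`r - 1` occurs squared or not at all. -/
theorem tilt_eq : ∃ t1 t2 t3 t4 : ℝ, (∀ y, tilt a b p q s y =
      t1 * gaussDen a y + t2 * gaussDen b y + t3 * gaussDen (2 * a - b) y
        + t4 * gaussDen (2 * b - a) y) ∧
      (∫ y, tilt a b p q s y = t1 + t2 + t3 + t4) ∧
      ((p ∧ ¬ q ∧ ¬ s) ∨ (¬ p ∧ q ∧ ¬ s) → t1 + t2 + t3 + t4 = 0) ∧
      (¬ p ∧ ¬ q ∧ ¬ s → t1 + t2 + t3 + t4 = 1) ∧
      ((p ↔ q) → t1 + t2 + t3 + t4 ≤ Real.exp ((a - b) ^ 2)) := by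
  have one_le : 1 ≤ Real.exp ((a - b) ^ 2) := Real.one_le_exp (sq_nonneg _)
  have hsym : (b - a) ^ 2 = (a - b) ^ 2 := by ring
  suffices H : ∃ t1 t2 t3 t4 : ℝ, (∀ y, tilt a b p q s y =
      t1 * gaussDen a y + t2 * gaussDen b y + t3 * gaussDen (2 * a - b) y
        + t4 * gaussDen (2 * b - a) y) ∧
      ((p ∧ ¬ q ∧ ¬ s) ∨ (¬ p ∧ q ∧ ¬ s) → t1 + t2 + t3 + t4 = 0) ∧
      (¬ p ∧ ¬ q ∧ ¬ s → t1 + t2 + t3 + t4 = 1) ∧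
      ((p ↔ q) → t1 + t2 + t3 + t4 ≤ Real.exp ((a - b) ^ 2)) by
    obtain ⟨t1, t2, t3, t4, h, h'⟩ := H
    refine ⟨t1, t2, t3, t4, h, ?_, h'⟩
    simp_rw [h]
    have i1 := (gaussDen_integrable a).const_mul t1
    have i2 := (gaussDen_integrable b).const_mul t2
    have i3 := (gaussDen_integrable (2 * a - b)).const_mul t3
    have i4 := (gaussDen_integrable (2 * b - a)).const_mul t4
    rw [integral_add, integral_add, integral_add i1 i2]
    rotate_left
    · exact i1.add i2
    · exact i3
    · exact (i1.add i2).add i3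
    · exact i4
    simp only [integral_const_mul, gaussDen_integral, mul_one]
  have e1 := den_mul_lr a b
  have e2 := den_mul_lr_sq a b
  have e3 := den_mul_lr_inv a b
  have e4 := lr_mul_lr a b
  rw [hsym] at e3
  unfold tilt
  by_cases hp : p <;> by_cases hq : q <;> by_cases hs : s <;>
    simp only [hp, hq, hs, if_true, if_false, mul_one]
  · refine ⟨1, -2, 0, Real.exp ((a - b) ^ 2), fun y => ?_, by simp, by simp, fun _ => by linarith⟩
    linear_combination (gaussDen b y * lr a b y - 2 * gaussDen b y) * e4 y + e1 y + e3 y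
  · refine ⟨-2, 1, Real.exp ((a - b) ^ 2), 0, fun y => ?_, by simp, by simp, fun _ => by linarith⟩
    linear_combination e2 y - 2 * e1 y
  · refine ⟨0, 1, 0, -Real.exp ((a - b) ^ 2), fun y => ?_, by simp, by simp, by simp⟩
    linear_combination gaussDen b y * e4 y - e3 y
  · refine ⟨1, -1, 0, 0, fun y => ?_, by simp, by simp, by simp⟩
    linear_combination e1 y
  · refine ⟨0, 1, 0, -Real.exp ((a - b) ^ 2), fun y => ?_, by simp, by simp, by simp⟩
    linear_combination gaussDen b y * e4 y - e3 y
  · refine ⟨1, -1, 0, 0, fun y => ?_, by simp, by simp, by simp⟩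
    linear_combination e1 y
  · refine ⟨0, 0, 0, Real.exp ((a - b) ^ 2), fun y => ?_, by simp, by simp, fun _ => by linarith⟩
    linear_combination e3 y
  · refine ⟨0, 1, 0, 0, fun y => ?_, by simp, by simp, fun _ => by linarith⟩
    ring

theorem tilt_integrable : Integrable (tilt a b p q s) := by
  obtain ⟨t1, t2, t3, t4, h, -⟩ := tilt_eq a b p q s
  rw [show tilt a b p q s = _ from funext h]
  exact ((((gaussDen_integrable a).const_mul t1).add ((gaussDen_integrable b).const_mul t2)).add
    ((gaussDen_integrable _).const_mul t3)).add ((gaussDen_integrable _).const_mul t4)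

theorem tilt_integral_zero (h : (p ∧ ¬ q ∧ ¬ s) ∨ (¬ p ∧ q ∧ ¬ s)) :
    ∫ y, tilt a b p q s y = 0 := by
  obtain ⟨t1, t2, t3, t4, -, h1, h2, -⟩ := tilt_eq a b p q s
  rw [h1, h2 h]

theorem tilt_integral_one (hp : ¬ p) (hq : ¬ q) (hs : ¬ s) :
    ∫ y, tilt a b p q s y = 1 := by
  obtain ⟨t1, t2, t3, t4, -, h1, -, h2, -⟩ := tilt_eq a b p q s
  rw [h1, h2 ⟨hp, hq, hs⟩]

theorem tilt_integral_le (h : p ↔ q) : ∫ y, tilt a b p q s y ≤ Real.exp ((a - b) ^ 2) := by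
  obtain ⟨t1, t2, t3, t4, -, h1, -, -, h2⟩ := tilt_eq a b p q s
  rw [h1]; exact h2 h

theorem tilt_nonneg (h : p ↔ q) (y : ℝ) : 0 ≤ tilt a b p q s y := by
  have h1 := (gaussDen_pos b y).le
  have h2 := (lr_pos b a y).le
  have : 0 ≤ (if p then lr a b y - 1 else 1) * (if q then lr a b y - 1 else 1) := by
    by_cases hp : p
    · simp only [hp, h.1 hp, if_true]; exact mul_self_nonneg _
    · simp [hp, mt h.2 hp]
  unfold tilt
  rw [mul_assoc (gaussDen b y)]
  refine mul_nonneg (mul_nonneg h1 this) ?_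
  split_ifs <;> positivity
end

/-! ### Second-moment bound for a random swap -/

section Key
variable {n : ℕ} (ν : Fin n → ℝ) (i : Fin n)

/-- `(δ^S(y) - ν_l) f_{ν_l}(y)`; these sum to zero over `l`. -/
def coefA (l : Fin n) (y : ℝ) : ℝ :=
  (deltaS ν (fun j => gaussDen (ν j)) y - ν l) * gaussDen (ν l) y

theorem sum_den_pos (i : Fin n) (y : ℝ) : 0 < ∑ l, gaussDen (ν l) y :=
  Finset.sum_pos (fun _ _ => gaussDen_pos _ _) ⟨i, Finset.mem_univ _⟩

theorem sum_coefA (i : Fin n) (y : ℝ) : ∑ l, coefA ν l y = 0 := by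
  have := sum_den_pos ν i y
  simp only [coefA, sub_mul, Finset.sum_sub_distrib, ← Finset.mul_sum, deltaS]
  field_simp
  ring

theorem deltaS_abs_le (i : Fin n) (c : ℝ) (hc : ∀ k, |ν k| ≤ c) (y : ℝ) :
    |deltaS ν (fun j => gaussDen (ν j)) y| ≤ c := by
  have h := sum_den_pos ν i y
  rw [deltaS, abs_div, abs_of_pos h, div_le_iff₀ h, Finset.mul_sum]
  refine (Finset.abs_sum_le_sum_abs _ _).trans (Finset.sum_le_sum fun j _ => ?_)
  rw [abs_mul, abs_of_pos (gaussDen_pos _ _)]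
  exact mul_le_mul_of_nonneg_right (hc j) (gaussDen_pos _ _).le

theorem deltaS_measurable : Measurable (deltaS ν (fun j => gaussDen (ν j))) := by
  unfold deltaS; fun_prop

theorem coefA_measurable (l : Fin n) : Measurable (coefA ν l) := by
  have := deltaS_measurable ν
  unfold coefA; fun_prop

theorem coefA_abs_le (i : Fin n) (c : ℝ) (hc : ∀ k, |ν k| ≤ c) (l : Fin n) (y : ℝ) :
    |coefA ν l y| ≤ 2 * c * gaussDen (ν l) y := by
  rw [coefA, abs_mul, abs_of_pos (gaussDen_pos _ _)]
  refine mul_le_mul_of_nonneg_right ?_ (gaussDen_pos _ _).le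
  have := abs_sub (deltaS ν (fun j => gaussDen (ν j)) y) (ν l)
  linarith [hc l, deltaS_abs_le ν i c hc y]

/-- Coefficient, as a function of the distinguished observation, of
`X_l X_{l'} / r_m` in the expansion of the integrand. -/
def coefB (l l' m : Fin n) (y : ℝ) : ℝ :=
  coefA ν l y * coefA ν l' y * gaussDen (ν m) y / (∑ k, gaussDen (ν k) y) ^ 2

theorem coefB_integrable (i : Fin n) (c : ℝ) (hc : ∀ k, |ν k| ≤ c) (l l' m : Fin n) :
    Integrable (coefB ν l l' m) := by
  have hm : Measurable (coefB ν l l' m) := by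
    have := coefA_measurable ν l
    have := coefA_measurable ν l'
    unfold coefB; fun_prop
  refine ((gaussDen_integrable (ν l)).const_mul ((2 * c) ^ 2)).mono' hm.aestronglyMeasurable
    (ae_of_all _ fun y => ?_)
  have hS := sum_den_pos ν i y
  have h1 := coefA_abs_le ν i c hc l y
  have h2 := coefA_abs_le ν i c hc l' y
  have hle : ∀ k, gaussDen (ν k) y ≤ ∑ k, gaussDen (ν k) y := fun k =>
    Finset.single_le_sum (f := fun k => gaussDen (ν k) y) (fun _ _ => (gaussDen_pos _ _).le)
      (Finset.mem_univ k)
  have hc0 : 0 ≤ c := (abs_nonneg _).trans (hc i)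
  have p0 := gaussDen_pos (ν l) y
  have p1 := gaussDen_pos (ν m) y
  rw [coefB, Real.norm_eq_abs, abs_div, abs_mul, abs_mul, abs_of_pos p1, abs_of_pos (pow_pos hS 2),
    div_le_iff₀ (pow_pos hS 2)]
  calc |coefA ν l y| * |coefA ν l' y| * gaussDen (ν m) y
      ≤ (2 * c * gaussDen (ν l) y) * (2 * c * ∑ k, gaussDen (ν k) y) * ∑ k, gaussDen (ν k) y := by
        gcongr
        · exact h2.trans (by gcongr; exact hle l')
        · exact hle m
    _ = _ := by ring

theorem coefB_diag_nonneg (l m : Fin n) (y : ℝ) : 0 ≤ coefB ν l l m y :=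
  div_nonneg (mul_nonneg (mul_self_nonneg _) (gaussDen_pos _ _).le) (sq_nonneg _)

/-- The bound does not involve `n`: summing over `m` cancels one power of `∑ f_{ν_k}`, and the
remaining quotient is a weighted average. -/
theorem sum_coefB_le (i : Fin n) (c : ℝ) (hc : ∀ k, |ν k| ≤ c) (y : ℝ) :
    ∑ l, ∑ m, coefB ν l l m y
      ≤ (2 * c) ^ 2 * (Real.exp (c ^ 2 / 2) * (gaussDen c y + gaussDen (-c) y)) := by
  have hS := sum_den_pos ν i y
  set S := ∑ k, gaussDen (ν k) y with hSdef
  set E := Real.exp (c ^ 2 / 2) * (gaussDen c y + gaussDen (-c) y)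
  have e1 : ∑ l, ∑ m, coefB ν l l m y = (∑ l, coefA ν l y ^ 2) / S := by
    simp only [coefB, ← hSdef]
    rw [Finset.sum_div]
    refine Finset.sum_congr rfl fun l _ => ?_
    rw [← Finset.sum_div, ← Finset.mul_sum, ← hSdef]
    field_simp
  rw [e1, div_le_iff₀ hS, hSdef, Finset.mul_sum]
  refine Finset.sum_le_sum fun l _ => ?_
  have h1 := coefA_abs_le ν i c hc l y
  have h2 := gaussDen_le c (ν l) y (hc l)
  have p0 := gaussDen_pos (ν l) y
  calc coefA ν l y ^ 2 = |coefA ν l y| ^ 2 := (sq_abs _).symm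
    _ ≤ (2 * c * gaussDen (ν l) y) ^ 2 := by gcongr
    _ = (2 * c) ^ 2 * gaussDen (ν l) y * gaussDen (ν l) y := by ring
    _ ≤ (2 * c) ^ 2 * E * gaussDen (ν l) y := by gcongr

/-- The `k`-th coordinate factor of one term of the expansion. -/
def factor (l l' m k : Fin n) (y : ℝ) : ℝ :=
  (if k = i then coefB ν l l' m y else gaussDen (ν k) y)
    * (if k = l then lr (ν i) (ν k) y - 1 else 1) * (if k = l' then lr (ν i) (ν k) y - 1 else 1)
    * (if k = m then lr (ν k) (ν i) y else 1)

theorem factor_of_ne {l l' m k : Fin n} (h : k ≠ i) :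
    factor ν i l l' m k = tilt (ν i) (ν k) (k = l) (k = l') (k = m) := by
  funext y; simp [factor, tilt, h]

/-- At the distinguished coordinate the likelihood ratio is `1`, so a factor `r - 1` kills the
whole term. -/
theorem factor_self (l l' m : Fin n) (y : ℝ) :
    factor ν i l l' m i y = if i = l ∨ i = l' then 0 else coefB ν l l' m y := by
  by_cases h1 : i = l <;> by_cases h2 : i = l' <;> simp [factor, lr_self, h1, h2]

theorem factor_integrable (c : ℝ) (hc : ∀ k, |ν k| ≤ c) (l l' m k : Fin n) :
    Integrable (factor ν i l l' m k) := by
  by_cases h : k = i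
  · subst h
    rw [show factor ν k l l' m k = _ from funext (factor_self ν k l l' m)]
    split_ifs
    · exact integrable_zero _ _ _
    · exact coefB_integrable ν k c hc l l' m
  · rw [factor_of_ne ν i h]; exact tilt_integrable _ _ _ _ _

/-- Off-diagonal terms vanish: one of `l, l'` differs from `m`, and its coordinate integrates to
zero. -/
theorem integral_off_diag (l l' m : Fin n) (h : l ≠ l') :
    ∫ y : Fin n → ℝ, ∏ k, factor ν i l l' m k (y k) = 0 := by
  rw [integral_fintype_prod_volume_eq_prod]
  have key : ∃ q, (q = l ∧ q ≠ l' ∧ q ≠ m) ∨ (q ≠ l ∧ q = l' ∧ q ≠ m) := by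
    by_cases hm : l = m
    · exact ⟨l', Or.inr ⟨h.symm, rfl, fun h' => h (hm.trans h'.symm)⟩⟩
    · exact ⟨l, Or.inl ⟨rfl, h, hm⟩⟩
  obtain ⟨q, hq⟩ := key
  refine Finset.prod_eq_zero (Finset.mem_univ q) ?_
  by_cases hqi : q = i
  · subst hqi
    simp_rw [factor_self]
    have : q = l ∨ q = l' := by tauto
    simp [this]
  · rw [factor_of_ne ν i hqi]
    exact tilt_integral_zero _ _ _ _ _ hq

/-- Only the coordinates `l` and `m` can have an integral above `1`; each contributes at most
`exp (4 c²)`, because `|ν_i - ν_k| ≤ 2 c`. -/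
theorem integral_diag_le (c : ℝ) (hc : ∀ k, |ν k| ≤ c) (l m : Fin n) :
    ∫ y : Fin n → ℝ, ∏ k, factor ν i l l m k (y k)
      ≤ Real.exp (8 * c ^ 2) * ∫ y, coefB ν l l m y := by
  rw [integral_fintype_prod_volume_eq_prod]
  set E := Real.exp (4 * c ^ 2) with hE
  have hE1 : 1 ≤ E := Real.one_le_exp (by positivity)
  have hI : 0 ≤ ∫ y, coefB ν l l m y := integral_nonneg fun y => coefB_diag_nonneg ν l m y
  have hb : ∀ k ∈ Finset.univ, ∫ y, factor ν i l l m k y ≤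
      (if k = i then ∫ y, coefB ν l l m y else 1) * (if k = l then E else 1)
        * (if k = m then E else 1) := by
    intro k _
    have hge : 1 ≤ (if k = l then E else 1) * (if k = m then E else 1) := by
      split_ifs <;> nlinarith
    rw [mul_assoc]
    by_cases hk : k = i
    · subst hk
      simp_rw [factor_self]
      have hle : ∫ y, (if k = l ∨ k = l then 0 else coefB ν l l m y)
          ≤ ∫ y, coefB ν l l m y := by
        split_ifs
        · simpa using hI
        · exact le_rfl
      simp only [if_true]
      exact hle.trans (le_mul_of_one_le_right hI hge)
    · rw [factor_of_ne ν i hk, if_neg hk, one_mul]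
      by_cases h1 : k = l ∨ k = m
      · have hle : Real.exp ((ν i - ν k) ^ 2) ≤ E := by
          refine Real.exp_le_exp.2 ?_
          have h1 := abs_le.1 (hc i)
          have h2 := abs_le.1 (hc k)
          nlinarith
        refine ((tilt_integral_le _ _ _ _ _ Iff.rfl).trans hle).trans ?_
        split_ifs <;> first | nlinarith | (exfalso; tauto)
      · push Not at h1
        rw [tilt_integral_one _ _ _ _ _ h1.1 h1.1 h1.2]
        exact hge
  have hn : ∀ k ∈ Finset.univ, 0 ≤ ∫ y, factor ν i l l m k y := by
    intro k _
    refine integral_nonneg fun y => ?_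
    by_cases hk : k = i
    · subst hk
      rw [factor_self]
      split_ifs
      · exact le_rfl
      · exact coefB_diag_nonneg ν l m y
    · rw [factor_of_ne ν i hk]
      exact tilt_nonneg _ _ _ _ _ Iff.rfl y
  refine (Finset.prod_le_prod hn hb).trans (le_of_eq ?_)
  rw [Finset.prod_mul_distrib, Finset.prod_mul_distrib]
  simp only [Finset.prod_ite_eq', Finset.mem_univ, if_true]
  rw [mul_assoc, hE, ← Real.exp_add, mul_comm]
  congr 2; ring

/-- Integrable majorant of `(∑_l h_l F_l)² / ∑_l F_l`, where `F_l` is the joint density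
`swapDen ν i l` and `h_l = δ^S(y_i) - ν_l`, written as a sum of products of functions of one
coordinate each. -/
def majorant (y : Fin n → ℝ) : ℝ :=
  ∑ l, ∑ l', ∑ m, ∏ k, factor ν i l l' m k (y k)

theorem majorant_integrable (c : ℝ) (hc : ∀ k, |ν k| ≤ c) : Integrable (majorant ν i) := by
  unfold majorant
  refine integrable_finsetSum _ fun l _ => integrable_finsetSum _ fun l' _ =>
    integrable_finsetSum _ fun m _ => ?_
  exact Integrable.fintype_prod fun k => factor_integrable ν i c hc l l' m k

/-- The constant `κ(c)`. -/
def kap (c : ℝ) : ℝ :=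
  Real.exp (8 * c ^ 2) * ((2 * c) ^ 2 * (Real.exp (c ^ 2 / 2) * (1 + 1)))

theorem kap_nonneg (c : ℝ) : 0 ≤ kap c := by unfold kap; positivity

theorem integral_majorant_le (c : ℝ) (hc : ∀ k, |ν k| ≤ c) :
    ∫ y, majorant ν i y ≤ kap c := by
  have hint : ∀ l l' m, Integrable (fun y : Fin n → ℝ => ∏ k, factor ν i l l' m k (y k)) :=
    fun l l' m => Integrable.fintype_prod fun k => factor_integrable ν i c hc l l' m k
  have e : ∫ y, majorant ν i y = ∑ l, ∑ m, ∫ y : Fin n → ℝ, ∏ k, factor ν i l l m k (y k) := by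
    unfold majorant
    rw [integral_finsetSum _ fun l _ => integrable_finsetSum _ fun l' _ =>
      integrable_finsetSum _ fun m _ => hint l l' m]
    refine Finset.sum_congr rfl fun l _ => ?_
    rw [integral_finsetSum _ fun l' _ => integrable_finsetSum _ fun m _ => hint l l' m,
      Finset.sum_eq_single l]
    · rw [integral_finsetSum _ fun m _ => hint l l m]
    · intro l' _ hl
      rw [integral_finsetSum _ fun m _ => hint l l' m]
      exact Finset.sum_eq_zero fun m _ => integral_off_diag ν i l l' m hl.symm
    · simp
  have hB := coefB_integrable ν i c hc
  have i1 := gaussDen_integrable c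
  have i2 := gaussDen_integrable (-c)
  rw [e]
  calc _ ≤ ∑ l, ∑ m, Real.exp (8 * c ^ 2) * ∫ y, coefB ν l l m y :=
        Finset.sum_le_sum fun l _ => Finset.sum_le_sum fun m _ => integral_diag_le ν i c hc l m
    _ = Real.exp (8 * c ^ 2) * ∫ y, ∑ l, ∑ m, coefB ν l l m y := by
        rw [integral_finsetSum _ fun l _ => integrable_finsetSum _ fun m _ => hB l l m]
        simp_rw [integral_finsetSum _ fun m _ => hB _ _ m, Finset.mul_sum]
    _ ≤ Real.exp (8 * c ^ 2) *
          ∫ y, (2 * c) ^ 2 * (Real.exp (c ^ 2 / 2) * (gaussDen c y + gaussDen (-c) y)) := by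
        refine mul_le_mul_of_nonneg_left (integral_mono ?_ ?_ (sum_coefB_le ν i c hc))
          (Real.exp_pos _).le
        · exact integrable_finsetSum _ fun l _ => integrable_finsetSum _ fun m _ => hB l l m
        · exact ((i1.add i2).const_mul _).const_mul _
    _ = kap c := by
        rw [integral_const_mul, integral_const_mul, integral_add i1 i2, gaussDen_integral,
          gaussDen_integral, kap]

/-- The joint density of the observations when the parameters are `ν` with entries `i`, `l`
swapped. -/
def swapDen (l : Fin n) (y : Fin n → ℝ) : ℝ :=
  ∏ k, gaussDen (ν (Equiv.swap i l k)) (y k)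

/-- Swapping `i` and `l` changes only the coordinates `i` and `l` of the product density. The
formula also holds for `l = i`, where the likelihood ratio is `1`. -/
theorem swapDen_eq (l : Fin n) (y : Fin n → ℝ) :
    swapDen ν i l y = (∏ k, if k = i then 1 else gaussDen (ν k) (y k))
      * (gaussDen (ν l) (y i) * lr (ν i) (ν l) (y l)) := by
  have h : ∀ k, gaussDen (ν (Equiv.swap i l k)) (y k) =
      (if k = i then 1 else gaussDen (ν k) (y k)) * (if k = i then gaussDen (ν l) (y k) else 1)
        * (if k = l then lr (ν i) (ν k) (y k) else 1) := by
    intro k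
    by_cases h1 : k = i
    · subst h1
      by_cases h2 : k = l
      · subst h2; simp [lr_self]
      · simp [h2]
    · by_cases h2 : k = l
      · subst h2
        simp only [Equiv.swap_apply_right, h1, if_false, if_true, mul_one]
        rw [den_mul_lr]
      · simp [h1, h2, Equiv.swap_apply_of_ne_of_ne]
  rw [swapDen, Finset.prod_congr rfl fun k _ => h k, Finset.prod_mul_distrib,
    Finset.prod_mul_distrib]
  simp [mul_assoc]

theorem majorant_eq (y : Fin n → ℝ) :
    majorant ν i y = (∏ k, if k = i then 1 else gaussDen (ν k) (y k))
      * ((∑ l, coefA ν l (y i) * (lr (ν i) (ν l) (y l) - 1)) ^ 2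
        * (∑ m, gaussDen (ν m) (y i) * lr (ν m) (ν i) (y m))
          / (∑ k, gaussDen (ν k) (y i)) ^ 2) := by
  have h : ∀ l l' m, ∏ k, factor ν i l l' m k (y k) =
      (∏ k, if k = i then 1 else gaussDen (ν k) (y k)) * (coefB ν l l' m (y i)
        * (lr (ν i) (ν l) (y l) - 1) * (lr (ν i) (ν l') (y l') - 1) * lr (ν m) (ν i) (y m)) := by
    intro l l' m
    have h1 : ∀ k, (if k = i then coefB ν l l' m (y k) else gaussDen (ν k) (y k)) =
      (if k = i then 1 else gaussDen (ν k) (y k)) *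
        (if k = i then coefB ν l l' m (y k) else 1) := by intro k; split_ifs <;> simp
    simp only [factor, h1, Finset.prod_mul_distrib, Finset.prod_ite_eq', Finset.mem_univ, if_true]
    ring
  simp only [majorant, h, ← Finset.mul_sum]
  congr 1
  rw [sq, Finset.sum_mul_sum, Finset.sum_mul, Finset.sum_div]
  refine Finset.sum_congr rfl fun l _ => ?_
  rw [Finset.sum_mul, Finset.sum_div]
  refine Finset.sum_congr rfl fun l' _ => ?_
  rw [Finset.mul_sum, Finset.sum_div]
  refine Finset.sum_congr rfl fun m _ => ?_
  rw [coefB]; ring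

/-- The pointwise inequality `2 t N ≤ N² / D + t² D` for `D = ∑_l F_l` and `N = ∑_l h_l F_l`, with
`1 / D` replaced by its Cauchy–Schwarz upper bound (`F_l = swapDen ν i l`,
`h_l = δ^S(y_i) - ν_l`). -/
theorem pointwise_le (y : Fin n → ℝ) (t : ℝ) :
    2 * ∑ l, t * (deltaS ν (fun j => gaussDen (ν j)) (y i) - ν l) * swapDen ν i l y
      ≤ majorant ν i y + t ^ 2 * ∑ l, swapDen ν i l y := by
  have hB : 0 < ∏ k, (if k = i then 1 else gaussDen (ν k) (y k)) :=
    Finset.prod_pos fun k _ => by split_ifs; exacts [one_pos, gaussDen_pos _ _]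
  have hS := sum_den_pos ν i (y i)
  have h0 := sum_coefA ν i (y i)
  simp_rw [majorant_eq, swapDen_eq]
  set B := ∏ k, (if k = i then 1 else gaussDen (ν k) (y k))
  set S := ∑ k, gaussDen (ν k) (y i)
  set N := ∑ l, coefA ν l (y i) * (lr (ν i) (ν l) (y l) - 1) with hN
  set T := ∑ m, gaussDen (ν m) (y i) * lr (ν m) (ν i) (y m) with hT
  have e1 : ∑ l, t * (deltaS ν (fun j => gaussDen (ν j)) (y i) - ν l) *
      (B * (gaussDen (ν l) (y i) * lr (ν i) (ν l) (y l))) = B * (t * N) := by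
    -- Centring the likelihood ratios is free since the coefficients sum to zero.
    have : N = ∑ l, coefA ν l (y i) * lr (ν i) (ν l) (y l) := by
      rw [hN]; simp only [mul_sub, mul_one, Finset.sum_sub_distrib, h0, sub_zero]
    rw [this, Finset.mul_sum, Finset.mul_sum]
    refine Finset.sum_congr rfl fun l _ => ?_
    rw [coefA]; ring
  rw [e1, ← Finset.mul_sum]
  set D := ∑ l, gaussDen (ν l) (y i) * lr (ν i) (ν l) (y l) with hD
  have hDpos : 0 < D := Finset.sum_pos
    (fun l _ => mul_pos (gaussDen_pos _ _) (lr_pos _ _ _)) ⟨i, Finset.mem_univ _⟩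
  have hCS : S ^ 2 ≤ D * T := by
    refine Finset.sum_sq_le_sum_mul_sum_of_sq_le_mul _ (fun l _ => ?_) (fun l _ => ?_)
      (fun l _ => ?_)
    · exact (mul_pos (gaussDen_pos _ _) (lr_pos _ _ _)).le
    · exact (mul_pos (gaussDen_pos _ _) (lr_pos _ _ _)).le
    · refine le_of_eq ?_
      linear_combination (-(gaussDen (ν l) (y i)) ^ 2) * lr_mul_lr (ν i) (ν l) (y l)
  have h1 : N ^ 2 / D ≤ N ^ 2 * T / S ^ 2 := by
    rw [div_le_div_iff₀ hDpos (pow_pos hS 2)]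
    nlinarith [mul_le_mul_of_nonneg_left hCS (sq_nonneg N)]
  have h2 : 2 * (t * N) ≤ N ^ 2 / D + t ^ 2 * D := by
    have : N ^ 2 / D + t ^ 2 * D - 2 * (t * N) = (N - t * D) ^ 2 / D := by field_simp; ring
    have := div_nonneg (sq_nonneg (N - t * D)) hDpos.le
    linarith
  nlinarith [mul_le_mul_of_nonneg_left (h2.trans (add_le_add_left h1 _)) hB.le]

end Key

/-! ### The random-permutation model -/

section Model
variable {n : ℕ}

theorem lintegral_gaussDen (μ : ℝ) : ∫⁻ y, ENNReal.ofReal (gaussDen μ y) = 1 := by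
  rw [← ofReal_integral_eq_lintegral_ofReal (gaussDen_integrable μ)
    (ae_of_all _ fun y => (gaussDen_pos μ y).le), gaussDen_integral, ENNReal.ofReal_one]

instance (μ : ℝ) : IsProbabilityMeasure
    ((volume : Measure ℝ).withDensity fun y => ENNReal.ofReal (gaussDen μ y)) := by
  constructor
  rw [withDensity_apply _ MeasurableSet.univ, Measure.restrict_univ, lintegral_gaussDen]

instance (ν : Fin n → ℝ) :
    IsProbabilityMeasure (prodDens volume fun k => gaussDen (ν k)) := by
  unfold prodDens; infer_instance

/-- The joint density of independent `N(ν_k, 1)` observations. -/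
def dens (ν : Fin n → ℝ) (y : Fin n → ℝ) : ℝ := ∏ k, gaussDen (ν k) (y k)

theorem dens_nonneg (ν : Fin n → ℝ) (y : Fin n → ℝ) : 0 ≤ dens ν y :=
  Finset.prod_nonneg fun _ _ => (gaussDen_pos _ _).le

theorem dens_integrable (ν : Fin n → ℝ) : Integrable (dens ν) :=
  Integrable.fintype_prod fun k => gaussDen_integrable (ν k)

theorem dens_measurable (ν : Fin n → ℝ) : Measurable (dens ν) := by
  unfold dens; fun_prop

theorem prodDens_eq (ν : Fin n → ℝ) : prodDens volume (fun k => gaussDen (ν k)) =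
    volume.withDensity fun y => ENNReal.ofReal (dens ν y) := by
  refine Measure.pi_eq fun s hs => ?_
  rw [withDensity_apply _ (MeasurableSet.univ_pi hs)]
  have h : ∀ k, (volume.withDensity fun y => ENNReal.ofReal (gaussDen (ν k) y)) (s k)
      = ENNReal.ofReal (∫ y in s k, gaussDen (ν k) y) := by
    intro k
    rw [withDensity_apply _ (hs k), ofReal_integral_eq_lintegral_ofReal
      (gaussDen_integrable _).integrableOn (ae_of_all _ fun y => (gaussDen_pos _ y).le)]
  rw [← ofReal_integral_eq_lintegral_ofReal (dens_integrable ν).integrableOn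
    (ae_of_all _ (dens_nonneg ν)), Finset.prod_congr rfl fun k _ => h k,
    ← ENNReal.ofReal_prod_of_nonneg fun k _ => integral_nonneg fun y => (gaussDen_pos _ y).le]
  congr 1
  rw [volume_pi, Measure.restrict_pi_pi]
  exact integral_fintype_prod_eq_prod fun k => gaussDen (ν k)

variable (μs : Fin n → ℝ)

/-- The random-permutation normal shift model. -/
abbrev P : Measure (Equiv.Perm (Fin n) × (Fin n → ℝ)) :=
  bayesP volume fun j => gaussDen (μs j)

instance : IsProbabilityMeasure (P μs) := by
  constructor
  have : ∀ π : Equiv.Perm (Fin n),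
      ((Measure.dirac π).prod (prodDens volume fun i => gaussDen (μs (π i)))) Set.univ = 1 :=
    fun π => measure_univ
  rw [P, bayesP, Measure.smul_apply, Measure.finsetSum_apply, Finset.sum_congr rfl fun π _ => this π]
  simp only [Finset.sum_const, Finset.card_univ, Fintype.card_perm, Fintype.card_fin, smul_eq_mul,
    nsmul_eq_mul, mul_one]
  exact ENNReal.inv_mul_cancel (by exact_mod_cast n.factorial_ne_zero) (ENNReal.natCast_ne_top _)

theorem integrable_of_bdd {Ω : Type*} [MeasurableSpace Ω] {m : Measure Ω} [IsFiniteMeasure m]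
    {g : Ω → ℝ} (hg : Measurable g) (K : ℝ) (hK : ∀ ω, |g ω| ≤ K) : Integrable g m :=
  Integrable.of_bound hg.aestronglyMeasurable K (ae_of_all _ hK)

/-- An expectation in the model is the average over `π` of integrals against the joint density. -/
theorem integral_P {g : Equiv.Perm (Fin n) × (Fin n → ℝ) → ℝ} (hg : Measurable g) (K : ℝ)
    (hK : ∀ ω, |g ω| ≤ K) :
    ∫ ω, g ω ∂(P μs) = (n.factorial : ℝ)⁻¹ *
      ∑ π : Equiv.Perm (Fin n), ∫ y, g (π, y) * dens (fun k => μs (π k)) y := by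
  rw [P, bayesP, integral_smul_measure, integral_finsetSum_measure
    fun π _ => integrable_of_bdd hg K hK]
  simp only [ENNReal.toReal_inv, ENNReal.toReal_natCast, smul_eq_mul]
  congr 1
  refine Finset.sum_congr rfl fun π _ => ?_
  rw [Measure.dirac_prod, integral_map measurable_prodMk_left.aemeasurable
    hg.aestronglyMeasurable, prodDens_eq (fun k => μs (π k)),
    integral_withDensity_eq_integral_toReal_smul (dens_measurable _).ennreal_ofReal
      (ae_of_all _ fun y => ENNReal.ofReal_lt_top)]
  refine integral_congr_ae (ae_of_all _ fun y => ?_)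
  simp only [ENNReal.toReal_ofReal (dens_nonneg _ y), smul_eq_mul]
  ring

/-- The symmetric rule depends on the parameters only through their multiset. -/
theorem deltaS_perm (π : Equiv.Perm (Fin n)) (y : ℝ) :
    deltaS (fun k => μs (π k)) (fun k => gaussDen (μs (π k))) y
      = deltaS μs (fun k => gaussDen (μs k)) y := by
  unfold deltaS
  rw [Equiv.sum_comp π (fun k => μs k * gaussDen (μs k) y),
    Equiv.sum_comp π (fun k => gaussDen (μs k) y)]

theorem sum_mul_swap (i : Fin n) (A : Equiv.Perm (Fin n) → ℝ) :
    ∑ π, ∑ l, A (π * Equiv.swap i l) = n * ∑ π, A π := by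
  rw [Finset.sum_comm]
  have : ∀ l, ∑ π, A (π * Equiv.swap i l) = ∑ π, A π := fun l =>
    Equiv.sum_comp (Equiv.mulRight (Equiv.swap i l)) A
  simp [this]

theorem Mpar_measurable (i : Fin n) : Measurable (Mpar (𝓨 := ℝ) μs i) :=
  (measurable_from_top (f := fun π : Equiv.Perm (Fin n) => μs (π i))).comp measurable_fst

/-- Dual form of the estimate `E(E(δ^S(Y_i) - M_i | Y)²) ≤ κ / n`: the residual is nearly
orthogonal to every function of the observations. The permutation is resampled as
`π ∘ (i l)` with `l` uniform, and the bound holds for each `π` separately. -/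
theorem dual_le (c : ℝ) (hc : ∀ k, |μs k| ≤ c) (i : Fin n) (ψ : (Fin n → ℝ) → ℝ)
    (hψ : Measurable ψ) (K : ℝ) (hK : ∀ y, |ψ y| ≤ K) :
    2 * ∫ ω, ψ ω.2 * (deltaS μs (fun j => gaussDen (μs j)) (ω.2 i) - Mpar μs i ω) ∂(P μs)
      ≤ kap c / n + ∫ ω, ψ ω.2 ^ 2 ∂(P μs) := by
  have hM := Mpar_measurable μs i
  have hD := deltaS_measurable μs
  have hDc := deltaS_abs_le μs i c hc
  have hK0 : 0 ≤ K := (abs_nonneg _).trans (hK 0)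
  have hb1 : ∀ (π : Equiv.Perm (Fin n)) y,
      |ψ y * (deltaS μs (fun j => gaussDen (μs j)) (y i) - μs (π i))| ≤ K * (2 * c) := by
    intro π y
    rw [abs_mul]
    have := abs_sub (deltaS μs (fun j => gaussDen (μs j)) (y i)) (μs (π i))
    exact mul_le_mul (hK y) (by linarith [hDc (y i), hc (π i)]) (abs_nonneg _) hK0
  have hb2 : ∀ y, |ψ y ^ 2| ≤ K ^ 2 := fun y => by
    rw [abs_pow]; exact pow_le_pow_left₀ (abs_nonneg _) (hK y) 2
  rw [integral_P μs (g := fun ω => ψ ω.2 *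
      (deltaS μs (fun j => gaussDen (μs j)) (ω.2 i) - Mpar μs i ω))
      (by fun_prop) (K * (2 * c)) (fun ω => hb1 ω.1 ω.2),
    integral_P μs (g := fun ω => ψ ω.2 ^ 2) (by fun_prop) (K ^ 2) (fun ω => hb2 ω.2)]
  simp only [Mpar]
  set A : Equiv.Perm (Fin n) → ℝ := fun π => ∫ y,
    ψ y * (deltaS μs (fun j => gaussDen (μs j)) (y i) - μs (π i)) * dens (fun k => μs (π k)) y
    with hA
  set B : Equiv.Perm (Fin n) → ℝ := fun π => ∫ y, ψ y ^ 2 * dens (fun k => μs (π k)) y with hB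
  have iA : ∀ π : Equiv.Perm (Fin n), Integrable fun y => ψ y *
      (deltaS μs (fun j => gaussDen (μs j)) (y i) - μs (π i)) * dens (fun k => μs (π k)) y :=
    fun π => (dens_integrable _).bdd_mul
      (Measurable.aestronglyMeasurable (by fun_prop)) (ae_of_all _ (hb1 π))
  have iB : ∀ π : Equiv.Perm (Fin n),
      Integrable fun y => ψ y ^ 2 * dens (fun k => μs (π k)) y :=
    fun π => (dens_integrable _).bdd_mul
      (Measurable.aestronglyMeasurable (by fun_prop)) (ae_of_all _ hb2)
  have key : ∀ π : Equiv.Perm (Fin n), 2 * ∑ l, A (π * Equiv.swap i l)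
      ≤ kap c + ∑ l, B (π * Equiv.swap i l) := by
    intro π
    have hcπ : ∀ k, |μs (π k)| ≤ c := fun k => hc _
    have iM := majorant_integrable (fun k => μs (π k)) i c hcπ
    have hle := integral_majorant_le (fun k => μs (π k)) i c hcπ
    rw [hA, hB]
    simp only
    rw [← integral_finsetSum _ fun l _ => iA _, ← integral_finsetSum _ fun l _ => iB _,
      ← integral_const_mul]
    have hmono : _ ≤ ∫ y, (majorant (fun k => μs (π k)) i y +
        ∑ l, ψ y ^ 2 * dens (fun k => μs ((π * Equiv.swap i l) k)) y) := integral_mono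
      ((integrable_finsetSum _ fun l _ => iA (π * Equiv.swap i l)).const_mul 2)
      (iM.add (integrable_finsetSum _ fun l _ => iB (π * Equiv.swap i l))) (fun y => by
        have h := pointwise_le (fun k => μs (π k)) i y (ψ y)
        simp only [deltaS_perm μs π, Finset.mul_sum (s := Finset.univ) (a := ψ y ^ 2)] at h
        simpa [Equiv.Perm.mul_apply, swapDen, dens] using h)
    rw [integral_add iM (integrable_finsetSum _ fun l _ => iB (π * Equiv.swap i l))] at hmono
    linarith
  have hsum := Finset.sum_le_sum fun π (_ : π ∈ Finset.univ) => key π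
  rw [← Finset.mul_sum, Finset.sum_add_distrib, sum_mul_swap, sum_mul_swap] at hsum
  simp only [Finset.sum_const, Finset.card_univ, Fintype.card_perm, Fintype.card_fin,
    nsmul_eq_mul] at hsum
  have hn : (0 : ℝ) < n := by exact_mod_cast i.pos
  have hf : (0 : ℝ) < n.factorial := by exact_mod_cast n.factorial_pos
  rw [← sub_nonneg]
  have : kap c / n + (n.factorial : ℝ)⁻¹ * ∑ π, B π - 2 * ((n.factorial : ℝ)⁻¹ * ∑ π, A π)
      = (n.factorial * kap c + n * ∑ π, B π - 2 * (n * ∑ π, A π)) / (n * n.factorial) := by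
    field_simp
  rw [this]
  exact div_nonneg (by linarith) (by positivity)

theorem sigmaY_le : sigmaY ℝ n ≤ Prod.instMeasurableSpace :=
  measurable_snd.comap_le

/-- In each coordinate the two oracle rules differ by at most `κ / n` in mean square, and by
orthogonality of `M_i - E(M_i | Y)` to functions of `Y` the excess risk of `δ^S` is that same mean
square. -/
theorem coord_le (c : ℝ) (hc : ∀ k, |μs k| ≤ c) (i : Fin n) :
    let H := (P μs)[Mpar μs i | sigmaY ℝ n]
    let D := fun ω : Equiv.Perm (Fin n) × (Fin n → ℝ) =>
      deltaS μs (fun j => gaussDen (μs j)) (ω.2 i)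
    (Integrable (fun ω => (D ω - H ω) ^ 2) (P μs)) ∧
    (Integrable (fun ω => (D ω - Mpar μs i ω) ^ 2) (P μs)) ∧
    (Integrable (fun ω => (H ω - Mpar μs i ω) ^ 2) (P μs)) ∧
    (∫ ω, (D ω - H ω) ^ 2 ∂(P μs) ≤ kap c / n) ∧
    (∫ ω, (D ω - Mpar μs i ω) ^ 2 ∂(P μs)) - (∫ ω, (H ω - Mpar μs i ω) ^ 2 ∂(P μs))
      = ∫ ω, (D ω - H ω) ^ 2 ∂(P μs) := by
  intro H D
  have hc0 : 0 ≤ c := (abs_nonneg _).trans (hc i)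
  have hM := Mpar_measurable μs i
  have hMb : ∀ ω, |Mpar (𝓨 := ℝ) μs i ω| ≤ c := fun ω => hc _
  have hMi : Integrable (Mpar μs i) (P μs) := integrable_of_bdd hM c hMb
  have hDm := deltaS_measurable μs
  have hDb := deltaS_abs_le μs i c hc
  have hHsm : StronglyMeasurable[sigmaY ℝ n] H := stronglyMeasurable_condExp
  have hHb : ∀ᵐ ω ∂(P μs), |H ω| ≤ c :=
    ae_bdd_abs_condExp_of_ae_bdd_abs (R := c) (ae_of_all _ hMb)
  obtain ⟨φ, hφ, hHφ⟩ := hHsm.measurable.exists_eq_measurable_comp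
  -- Truncation does not change `H` almost surely and makes the test function bounded.
  set ψ : (Fin n → ℝ) → ℝ := fun y =>
    deltaS μs (fun j => gaussDen (μs j)) (y i) - max (-c) (min c (φ y)) with hψdef
  have hψ : Measurable ψ := by fun_prop
  have hψb : ∀ y, |ψ y| ≤ 2 * c := by
    intro y
    have h1 := abs_le.1 (hDb (y i))
    have h2 : -c ≤ max (-c) (min c (φ y)) := le_max_left _ _
    have h3 : max (-c) (min c (φ y)) ≤ c := max_le (by linarith) (min_le_left _ _)
    rw [hψdef, abs_le]
    constructor <;> simp only <;> linarith
  have hae : ∀ᵐ ω ∂(P μs), D ω - H ω = ψ ω.2 := by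
    filter_upwards [hHb] with ω hω
    have e : H ω = φ ω.2 := congrFun hHφ ω
    obtain ⟨h1, h2⟩ := abs_le.1 hω
    rw [e] at h1 h2
    simp only [hψdef, D, e, min_eq_right h2, max_eq_right h1]
  have hψ2 : ∀ y, |ψ y ^ 2| ≤ (2 * c) ^ 2 := fun y => by
    rw [abs_pow]; exact pow_le_pow_left₀ (abs_nonneg _) (hψb y) 2
  have i1' : Integrable (fun ω => ψ ω.2 ^ 2) (P μs) :=
    integrable_of_bdd (by fun_prop) _ fun ω => hψ2 ω.2
  have hsq : (fun ω => (D ω - H ω) ^ 2) =ᵐ[P μs] fun ω => ψ ω.2 ^ 2 := by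
    filter_upwards [hae] with ω hω
    rw [hω]
  have i1 : Integrable (fun ω => (D ω - H ω) ^ 2) (P μs) := i1'.congr hsq.symm
  have i2 : Integrable (fun ω => (D ω - Mpar μs i ω) ^ 2) (P μs) := by
    refine integrable_of_bdd (by fun_prop) ((2 * c) ^ 2) fun ω => ?_
    rw [abs_pow]
    refine pow_le_pow_left₀ (abs_nonneg _) ?_ 2
    linarith [abs_sub (D ω) (Mpar μs i ω), hDb (ω.2 i), hMb ω]
  have hHm : AEStronglyMeasurable H (P μs) := (hHsm.mono sigmaY_le).aestronglyMeasurable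
  have i3 : Integrable (fun ω => (H ω - Mpar μs i ω) ^ 2) (P μs) := by
    refine Integrable.of_bound ((hHm.sub hM.aestronglyMeasurable).pow 2) ((2 * c) ^ 2) ?_
    filter_upwards [hHb] with ω hω
    rw [Real.norm_eq_abs, abs_pow]
    refine pow_le_pow_left₀ (abs_nonneg _) ?_ 2
    linarith [abs_sub (H ω) (Mpar μs i ω), hMb ω]
  have hHi : Integrable H (P μs) := integrable_condExp
  have hψY : StronglyMeasurable[sigmaY ℝ n] fun ω : Equiv.Perm (Fin n) × (Fin n → ℝ) => ψ ω.2 :=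
    (hψ.comp (comap_measurable Prod.snd)).stronglyMeasurable
  have hψm : Measurable fun ω : Equiv.Perm (Fin n) × (Fin n → ℝ) => ψ ω.2 := by fun_prop
  have iψM : Integrable (fun ω => ψ ω.2 * Mpar μs i ω) (P μs) :=
    hMi.bdd_mul hψm.aestronglyMeasurable (ae_of_all _ fun ω => hψb ω.2)
  have iψH : Integrable (fun ω => ψ ω.2 * H ω) (P μs) :=
    hHi.bdd_mul hψm.aestronglyMeasurable (ae_of_all _ fun ω => hψb ω.2)
  -- Orthogonality of `M - E(M | Y)` to functions of `Y`.
  have horth : ∫ ω, ψ ω.2 * Mpar μs i ω ∂(P μs) = ∫ ω, ψ ω.2 * H ω ∂(P μs) := by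
    rw [← integral_condExp (m := sigmaY ℝ n) sigmaY_le]
    exact integral_congr_ae (condExp_mul_of_stronglyMeasurable_left hψY iψM hMi)
  have horth' : ∫ ω, ψ ω.2 * (H ω - Mpar μs i ω) ∂(P μs) = 0 := by
    simp_rw [mul_sub]
    rw [integral_sub iψH iψM, horth, sub_self]
  have iorth : Integrable (fun ω => ψ ω.2 * (H ω - Mpar μs i ω)) (P μs) := by
    simp_rw [mul_sub]; exact iψH.sub iψM
  refine ⟨i1, i2, i3, ?_, ?_⟩
  · have hd := dual_le μs c hc i ψ hψ (2 * c) hψb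
    have e : ∫ ω, ψ ω.2 * (deltaS μs (fun j => gaussDen (μs j)) (ω.2 i) - Mpar μs i ω) ∂(P μs)
        = ∫ ω, ψ ω.2 ^ 2 ∂(P μs) := by
      rw [← add_zero (∫ ω, ψ ω.2 ^ 2 ∂(P μs)), ← horth', ← integral_add i1' iorth]
      refine integral_congr_ae ?_
      filter_upwards [hae] with ω hω
      have : deltaS μs (fun j => gaussDen (μs j)) (ω.2 i) = ψ ω.2 + H ω := by
        rw [← hω]; simp [D]
      rw [this]; ring
    rw [e] at hd
    rw [integral_congr_ae hsq]
    linarith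
  · rw [← integral_sub i2 i3, integral_congr_ae hsq,
      ← add_zero (∫ ω, ψ ω.2 ^ 2 ∂(P μs)), ← mul_zero 2, ← horth', ← integral_const_mul,
      ← integral_add i1' (iorth.const_mul 2)]
    refine integral_congr_ae ?_
    filter_upwards [hae] with ω hω
    have : D ω = ψ ω.2 + H ω := by rw [← hω]; ring
    simp only [this]; ring

end Model

/-! ### Both risk bounds -/

/-- bounded normal shift model.  For every `c` there is `κ = κ(c)` such that
for all `n` and all `μ_1,…,μ_n` with `|μ_i| ≤ c`, `E‖Δ^S − Δ^{PI}‖² ≤ κ` and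
`r^S_n − r^{PI}_n ≤ κ`. -/
theorem stmt_8 (c : ℝ) :
    ∃ κ : ℝ, ∀ (n : ℕ) (μs : Fin n → ℝ), (∀ i, |μs i| ≤ c) →
      (∫ ω, ∑ i,
          (deltaS μs (fun j => gaussDen (μs j)) (ω.2 i)
            - ((bayesP (volume : Measure ℝ) (fun j => gaussDen (μs j)))[Mpar μs i|
                sigmaY ℝ n]) ω) ^ 2
          ∂(bayesP (volume : Measure ℝ) (fun j => gaussDen (μs j))) ≤ κ)
      ∧ (∫ ω, ∑ i, (deltaS μs (fun j => gaussDen (μs j)) (ω.2 i) - Mpar μs i ω) ^ 2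
            ∂(bayesP (volume : Measure ℝ) (fun j => gaussDen (μs j))))
          - (∫ ω, ∑ i,
              (((bayesP (volume : Measure ℝ) (fun j => gaussDen (μs j)))[Mpar μs i|
                  sigmaY ℝ n]) ω - Mpar μs i ω) ^ 2
              ∂(bayesP (volume : Measure ℝ) (fun j => gaussDen (μs j))))
        ≤ κ := by
  refine ⟨kap c, fun n μs hc => ?_⟩
  have h := coord_le μs c hc
  -- For `n = 0` the sums are empty; otherwise `n` terms of size `κ / n`.
  have hsum : ∑ _i : Fin n, kap c / n ≤ kap c := by
    rcases Nat.eq_zero_or_pos n with rfl | hn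
    · simpa using kap_nonneg c
    · have hn' : (n : ℝ) ≠ 0 := by exact_mod_cast hn.ne'
      simp [mul_div_cancel₀ _ hn']
  have hle := (Finset.sum_le_sum fun i (_ : i ∈ Finset.univ) => (h i).2.2.2.1).trans hsum
  constructor
  · rw [integral_finsetSum _ fun i _ => (h i).1]
    exact hle
  · rw [integral_finsetSum _ fun i _ => (h i).2.1, integral_finsetSum _ fun i _ => (h i).2.2.1,
      ← Finset.sum_sub_distrib, Finset.sum_congr rfl fun i _ => (h i).2.2.2.2]
    exact hle
end
end

section
/- Equalizer property of permutation-invariant rules: let Δ : 𝒴ⁿ → ℝⁿ be measurable and permutation invariant, i.e., for every permutation σ of {1,…,n}, Δ(y_{σ(1)},…,y_{σ(n)}) = (Δ(y)_{σ(1)},…,Δ(y)_{σ(n)}). Then for every permutation τ, E_{μ∘τ}‖Δ(Y_{1:n}) − (μ_{τ(1)},…,μ_{τ(n)})‖² = E_{μ}‖Δ(Y_{1:n}) − μ_{1:n}‖², where E_{μ∘τ} is expectation under Y_i independent with density f_{μ_{τ(i)}}; consequently the frequentist risk E_{μ}‖Δ(Y_{1:n}) − μ_{1:n}‖² equals the Bayes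 risk E‖Δ(Y_{1:n}) − M_{1:n}‖² under the random-permutation Bayesian model. -/
/-!
Relabelling the coordinates by `τ⁻¹` carries the product law with densities `f ∘ τ` to the one
with densities `f`. Composing the loss at `μ` with this relabelling gives, by permutation
invariance of `Δ` and a reindexing of the sum over coordinates, the loss at `μ ∘ τ`. So the risk
does not depend on `τ` (`lintegral_loss_perm`), and the Bayes risk, an average of `n!` such
risks, equals their common value. No integrability of the loss is assumed: since the loss is
nonnegative, the Bayes risk is computed with Lebesgue integrals, where an infinite risk causes
no trouble with additivity, and only then converted to Bochner integrals.
-/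

open MeasureTheory ProbabilityTheory ENNReal

noncomputable section

/-- The squared-error loss of `Δ` at the parameter vector `μs`. -/
def loss {𝓨 : Type*} {n : ℕ} (Δ : (Fin n → 𝓨) → Fin n → ℝ) (μs : Fin n → ℝ)
    (y : Fin n → 𝓨) : ℝ := ∑ i, (Δ y i - μs i) ^ 2

lemma loss_nonneg {𝓨 : Type*} {n : ℕ} (Δ : (Fin n → 𝓨) → Fin n → ℝ) (μs : Fin n → ℝ)
    (y : Fin n → 𝓨) : 0 ≤ loss Δ μs y :=
  Finset.sum_nonneg fun _ _ => sq_nonneg _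

lemma measurable_loss {𝓨 : Type*} [MeasurableSpace 𝓨] {n : ℕ}
    {Δ : (Fin n → 𝓨) → Fin n → ℝ} (hΔ : Measurable Δ) (μs : Fin n → ℝ) :
    Measurable (loss Δ μs) := by
  unfold loss
  fun_prop

lemma loss_comp_symm {𝓨 : Type*} {n : ℕ} {Δ : (Fin n → 𝓨) → Fin n → ℝ}
    (hΔ_inv : ∀ (σ : Equiv.Perm (Fin n)) (y : Fin n → 𝓨),
      Δ (fun i => y (σ i)) = fun i => Δ y (σ i))
    (μs : Fin n → ℝ) (τ : Equiv.Perm (Fin n)) (y : Fin n → 𝓨) :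
    loss Δ μs (fun i => y (τ.symm i)) = loss Δ (fun i => μs (τ i)) y := by
  unfold loss
  rw [hΔ_inv τ.symm y, ← Equiv.sum_comp τ]
  simp

/-- The risk, as a Lebesgue integral, is unchanged when the parameters are permuted. -/
lemma lintegral_loss_perm {𝓨 : Type*} [MeasurableSpace 𝓨] (ν : Measure 𝓨)
    {n : ℕ} (μs : Fin n → ℝ) (f : Fin n → 𝓨 → ℝ)
    (hf_prob : ∀ j, ∫⁻ y, ENNReal.ofReal (f j y) ∂ν = 1)
    {Δ : (Fin n → 𝓨) → Fin n → ℝ} (hΔ_meas : Measurable Δ)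
    (hΔ_inv : ∀ (σ : Equiv.Perm (Fin n)) (y : Fin n → 𝓨),
      Δ (fun i => y (σ i)) = fun i => Δ y (σ i)) (τ : Equiv.Perm (Fin n)) :
    ∫⁻ y, ENNReal.ofReal (loss Δ (fun i => μs (τ i)) y) ∂(prodDens ν fun i => f (τ i))
      = ∫⁻ y, ENNReal.ofReal (loss Δ μs y) ∂(prodDens ν f) := by
  have hp (j : Fin n) : IsProbabilityMeasure (ν.withDensity fun y => ENNReal.ofReal (f j y)) :=
    ⟨by simpa using hf_prob j⟩
  have hmp := measurePreserving_piCongrLeft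
    (fun j => ν.withDensity fun y => ENNReal.ofReal (f j y)) τ
  have h := hmp.lintegral_comp (measurable_loss hΔ_meas μs).ennreal_ofReal
  have hcoord (y : Fin n → 𝓨) : MeasurableEquiv.piCongrLeft (fun _ => 𝓨) τ y
      = fun i => y (τ.symm i) := by
    funext i
    obtain ⟨j, rfl⟩ := τ.surjective i
    simp [MeasurableEquiv.piCongrLeft]
  simp only [hcoord, loss_comp_symm hΔ_inv] at h
  exact h

lemma lintegral_bayesP {𝓨 : Type*} [MeasurableSpace 𝓨] (ν : Measure 𝓨)
    {n : ℕ} (f : Fin n → 𝓨 → ℝ)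
    (hf_prob : ∀ j, ∫⁻ y, ENNReal.ofReal (f j y) ∂ν = 1)
    {g : Equiv.Perm (Fin n) × (Fin n → 𝓨) → ℝ≥0∞} (hg : Measurable g) :
    ∫⁻ ω, g ω ∂(bayesP ν f) = ((Nat.factorial n : ℝ≥0∞))⁻¹ *
      ∑ π : Equiv.Perm (Fin n), ∫⁻ y, g (π, y) ∂(prodDens ν fun i => f (π i)) := by
  have hp (j : Fin n) : IsProbabilityMeasure (ν.withDensity fun y => ENNReal.ofReal (f j y)) :=
    ⟨by simpa using hf_prob j⟩
  have hs (π : Equiv.Perm (Fin n)) : IsProbabilityMeasure (prodDens ν fun i => f (π i)) := by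
    unfold prodDens
    infer_instance
  rw [bayesP, lintegral_smul_measure, lintegral_finsetSum_measure, smul_eq_mul]
  congr 1
  refine Finset.sum_congr rfl fun π _ => ?_
  rw [Measure.dirac_prod, lintegral_map hg measurable_prodMk_left]


/-- equalizer property of permutation-invariant rules:  the frequentist risk
of a permutation-invariant `Δ` is the same under any permutation `τ` of the parameters,
and equals the Bayes risk under the random-permutation Bayesian model. -/
theorem stmt_9 {𝓨 : Type*} [MeasurableSpace 𝓨] (ν : Measure 𝓨) [SigmaFinite ν]
    (n : ℕ) (μs : Fin n → ℝ) (f : Fin n → 𝓨 → ℝ)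
    (hf_meas : ∀ j, Measurable (f j)) (hf_nonneg : ∀ j y, 0 ≤ f j y)
    (hf_prob : ∀ j, ∫⁻ y, ENNReal.ofReal (f j y) ∂ν = 1)
    (Δ : (Fin n → 𝓨) → Fin n → ℝ) (hΔ_meas : Measurable Δ)
    (hΔ_inv : ∀ (σ : Equiv.Perm (Fin n)) (y : Fin n → 𝓨),
      Δ (fun i => y (σ i)) = fun i => Δ y (σ i)) :
    (∀ τ : Equiv.Perm (Fin n),
      ∫ y, ∑ i, (Δ y i - μs (τ i)) ^ 2 ∂(prodDens ν fun i => f (τ i))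
        = ∫ y, ∑ i, (Δ y i - μs i) ^ 2 ∂(prodDens ν f))
    ∧ ∫ ω, ∑ i, (Δ ω.2 i - Mpar μs i ω) ^ 2 ∂(bayesP ν f)
        = ∫ y, ∑ i, (Δ y i - μs i) ^ 2 ∂(prodDens ν f) := by
  have hperm := lintegral_loss_perm ν μs f hf_prob hΔ_meas hΔ_inv
  have hfreq : ∫ y, loss Δ μs y ∂(prodDens ν f)
      = (∫⁻ y, ENNReal.ofReal (loss Δ μs y) ∂(prodDens ν f)).toReal :=
    integral_eq_lintegral_of_nonneg_ae (.of_forall (loss_nonneg Δ μs))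
      (measurable_loss hΔ_meas μs).aestronglyMeasurable
  refine ⟨fun τ => ?_, ?_⟩
  · change ∫ y, loss Δ (fun i => μs (τ i)) y ∂(prodDens ν fun i => f (τ i))
      = ∫ y, loss Δ μs y ∂(prodDens ν f)
    rw [hfreq, ← hperm τ]
    exact integral_eq_lintegral_of_nonneg_ae (.of_forall (loss_nonneg Δ _))
      (measurable_loss hΔ_meas _).aestronglyMeasurable
  · change ∫ ω, loss Δ (fun i => μs (ω.1 i)) ω.2 ∂(bayesP ν f)
      = ∫ y, loss Δ μs y ∂(prodDens ν f)
    -- The permutation component is discrete, so joint measurability is checked slice by slice.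
    have hmeas : Measurable fun ω : Equiv.Perm (Fin n) × (Fin n → 𝓨) =>
        loss Δ (fun i => μs (ω.1 i)) ω.2 :=
      measurable_from_prod_countable_right fun π => measurable_loss hΔ_meas fun i => μs (π i)
    rw [hfreq, integral_eq_lintegral_of_nonneg_ae (.of_forall fun _ => loss_nonneg Δ _ _)
      hmeas.aestronglyMeasurable, lintegral_bayesP ν f hf_prob hmeas.ennreal_ofReal]
    simp only [hperm, Finset.sum_const, Finset.card_univ, Fintype.card_perm, Fintype.card_fin,
      nsmul_eq_mul]
    rw [← mul_assoc, ENNReal.inv_mul_cancel (by exact_mod_cast n.factorial_ne_zero)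
      (ENNReal.natCast_ne_top _), one_mul]
end
end

section
/- Posterior odds formula in the two-valued model: let μ_{1:n} ∈ {0,1}ⁿ with K = Σ_{i=1}^n μ_i, 1 ≤ K ≤ n−1. For 0 ≤ k ≤ n−1 define f_k(y_{2:n}) = binom(n−1, k)^{-1} Σ_{S ⊆ {2,…,n}, |S| = k} Π_{j∈S} f_1(y_j) Π_{j∈{2,…,n}∖S} f_0(y_j). Then almost surely under the random-permutation Bayesian model, P(M_1 = 1 | Y_{1:n}) = K f_1(Y_1) f_{K−1}(Y_{2:n}) / (K f_1(Y_1) f_{K−1}(Y_{2:n}) + (n−K) f_0(Y_1) f_K(Y_{2:n})), while P(M_1 = 1 | Y_1) = K f_1(Y_1) / (K f_1(Y_1) + (n−K) f_0(Y_1)). -/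
/-!
Given the permutation `π`, a statistic `T` of the observations (all of `Y`, or `Y i0` alone) has a
density `d π` with respect to a fixed measure. A function `g` of the statistic is then the posterior
probability of an event `p π` as soon as `g * ∑ π, d π = ∑ π with p π, d π` pointwise
(`condExp_bayesP`), so both formulas reduce to finite sums over permutations.

For `T = Y`, the likelihood depends on `π` only through the set `S = {i | μ (π i) = 1}`, and every
set of size `K` arises from the same number of permutations (`sum_perm_preimage`). Splitting the
sum over `S` according to whether `i0 ∈ S` gives `choose (n-1) (K-1) * f1 (y i0) * f_{K-1}` and
`choose (n-1) K * f0 (y i0) * f_K`; the two binomial coefficients are in the ratio `K : (n - K)`.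

For `T = Y i0`, the density is that of the component `π i0`, which is uniform (`sum_perm_apply`).
-/

open MeasureTheory ProbabilityTheory ENNReal

noncomputable section

/-- the (exchangeable) mixture density `f_k` of the observations other than `i0`:
`f_k(y_{-i0}) = binom(n-1,k)⁻¹ Σ_{S, |S|=k, i0∉S} Π_{j∈S} f1(y_j) Π_{j∉S, j≠i0} f0(y_j)`. -/
def fmix {𝓨 : Type*} {n : ℕ} (f0 f1 : 𝓨 → ℝ) (i0 : Fin n) (k : ℕ)
    (y : Fin n → 𝓨) : ℝ :=
  (((n - 1).choose k : ℝ))⁻¹ *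
    ∑ S ∈ Finset.univ.filter (fun S : Finset (Fin n) => S.card = k ∧ i0 ∉ S),
      (∏ j ∈ S, f1 (y j)) * ∏ j ∈ (Finset.univ.erase i0) \ S, f0 (y j)

/-- Tonelli for a product of functions of separate coordinates, by splitting off coordinate `0`. -/
theorem lintegral_fin_prod {𝓨 : Type*} [MeasurableSpace 𝓨] (ν : Measure 𝓨) [SigmaFinite ν]
    {n : ℕ} (f : Fin n → 𝓨 → ℝ≥0∞) (hf : ∀ i, Measurable (f i)) :
    ∫⁻ y, ∏ i, f i (y i) ∂(Measure.pi fun _ : Fin n => ν) = ∏ i, ∫⁻ x, f i x ∂ν := by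
  induction n with
  | zero => simp
  | succ n ih =>
    rw [← ((measurePreserving_piFinSuccAbove (fun _ : Fin (n + 1) => ν) 0).symm).lintegral_comp
      (by fun_prop)]
    simp only [Fin.prod_univ_succ, MeasurableEquiv.piFinSuccAbove_symm_apply,
      Fin.insertNthEquiv_apply, Fin.insertNth_zero', Fin.cons_zero, Fin.cons_succ]
    rw [← ih (fun i => f i.succ) (fun i => hf _)]
    exact lintegral_prod_mul (μ := ν) (ν := Measure.pi fun _ : Fin n => ν) (f := f 0)
      (g := fun y : Fin n → 𝓨 => ∏ i, f i.succ (y i)) (hf 0).aemeasurable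
      (Finset.measurable_prod _ fun i _ => (hf i.succ).comp (measurable_pi_apply i)).aemeasurable

/-- The product of the laws `f i • ν` has the product density with respect to `ν^n`.
It suffices to compare the two measures on boxes. -/
theorem prodDens_eq_withDensity {𝓨 : Type*} [MeasurableSpace 𝓨] (ν : Measure 𝓨) [SigmaFinite ν]
    {n : ℕ} (f : Fin n → 𝓨 → ℝ) (hf : ∀ i, Measurable (f i)) (hf0 : ∀ i y, 0 ≤ f i y) :
    prodDens ν f = (Measure.pi fun _ : Fin n => ν).withDensity
      fun y => ENNReal.ofReal (∏ i, f i (y i)) := by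
  refine Measure.pi_eq fun s hs => ?_
  rw [withDensity_apply _ (MeasurableSet.univ_pi hs), ← lintegral_indicator
    (MeasurableSet.univ_pi hs)]
  have h : ∀ y : Fin n → 𝓨, (Set.univ.pi s).indicator
      (fun y => ENNReal.ofReal (∏ i, f i (y i))) y
      = ∏ i, (s i).indicator (fun x => ENNReal.ofReal (f i x)) (y i) := by
    intro y
    by_cases hy : y ∈ Set.univ.pi s
    · rw [Set.indicator_of_mem hy, ENNReal.ofReal_prod_of_nonneg fun i _ => hf0 i _]
      refine Finset.prod_congr rfl fun i _ => ?_
      rw [Set.indicator_of_mem (hy i trivial)]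
    · rw [Set.indicator_of_notMem hy]
      simp only [Set.mem_pi, Set.mem_univ, true_imp_iff, not_forall] at hy
      obtain ⟨i, hi⟩ := hy
      exact (Finset.prod_eq_zero (Finset.mem_univ i) (Set.indicator_of_notMem hi _)).symm
  simp_rw [h]
  rw [lintegral_fin_prod ν _ fun i => (hf i).ennreal_ofReal.indicator (hs i)]
  exact Finset.prod_congr rfl fun i _ => by
    rw [lintegral_indicator (hs i), withDensity_apply _ (hs i)]

/-- Integrals under the Bayesian model of a function of the permutation and a statistic `T` of the
observations, when `T` has density `d π` with respect to `lam` given `π`. -/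
theorem lintegral_bayesP_s10 {𝓨 E : Type*} [MeasurableSpace 𝓨] [MeasurableSpace E] (ν : Measure 𝓨)
    {n : ℕ} (φ : Fin n → 𝓨 → ℝ)
    [∀ π : Equiv.Perm (Fin n), IsProbabilityMeasure (prodDens ν fun i => φ (π i))]
    {T : (Fin n → 𝓨) → E} (hT : Measurable T) (lam : Measure E)
    (d : Equiv.Perm (Fin n) → E → ℝ) (hd : ∀ π, Measurable (d π))
    (hmap : ∀ π : Equiv.Perm (Fin n), (prodDens ν fun i => φ (π i)).map T
      = lam.withDensity fun e => ENNReal.ofReal (d π e))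
    (F : Equiv.Perm (Fin n) → E → ℝ≥0∞) (hF : ∀ π, Measurable (F π)) :
    ∫⁻ ω, F ω.1 (T ω.2) ∂(bayesP ν φ)
      = (n.factorial : ℝ≥0∞)⁻¹ * ∫⁻ e, ∑ π, ENNReal.ofReal (d π e) * F π e ∂lam := by
  have : MeasurableSingletonClass (Equiv.Perm (Fin n)) := ⟨fun _ => trivial⟩
  have hm : Measurable fun ω : Equiv.Perm (Fin n) × (Fin n → 𝓨) => F ω.1 (T ω.2) :=
    measurable_from_prod_countable_right fun π => (hF π).comp hT
  rw [bayesP, lintegral_smul_measure, lintegral_finsetSum_measure, smul_eq_mul]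
  rw [show ∫⁻ e, ∑ π, ENNReal.ofReal (d π e) * F π e ∂lam
      = ∑ π, ∫⁻ e, ENNReal.ofReal (d π e) * F π e ∂lam from
    lintegral_finsetSum _ fun π _ => (hd π).ennreal_ofReal.mul (hF π)]
  congr 1
  refine Finset.sum_congr rfl fun π _ => ?_
  rw [Measure.dirac_prod, lintegral_map hm measurable_prodMk_left, ← lintegral_map (hF π) hT,
    hmap π, lintegral_withDensity_eq_lintegral_mul _ (hd π).ennreal_ofReal (hF π)]
  rfl

/-- Bayes' rule for the event `p π` given a statistic `T` of the observations. The posterior `g` is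
specified by the multiplicative identity `hgd`, so its values where the total density vanishes are
irrelevant. -/
theorem condExp_bayesP {𝓨 E : Type*} [MeasurableSpace 𝓨] [MeasurableSpace E] (ν : Measure 𝓨)
    {n : ℕ} (φ : Fin n → 𝓨 → ℝ)
    [∀ π : Equiv.Perm (Fin n), IsProbabilityMeasure (prodDens ν fun i => φ (π i))]
    {T : (Fin n → 𝓨) → E} (hT : Measurable T) (lam : Measure E)
    (d : Equiv.Perm (Fin n) → E → ℝ) (hd : ∀ π, Measurable (d π)) (hd0 : ∀ π e, 0 ≤ d π e)
    (hmap : ∀ π : Equiv.Perm (Fin n), (prodDens ν fun i => φ (π i)).map T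
      = lam.withDensity fun e => ENNReal.ofReal (d π e))
    (p : Equiv.Perm (Fin n) → Prop) [DecidablePred p]
    (g : E → ℝ) (hg : Measurable g) (hg0 : ∀ e, 0 ≤ g e) (hg1 : ∀ e, g e ≤ 1)
    (hgd : ∀ e, g e * ∑ π, d π e = ∑ π, if p π then d π e else 0) :
    (bayesP ν φ)[fun ω => if p ω.1 then (1 : ℝ) else 0 |
        MeasurableSpace.comap (fun ω => T ω.2) inferInstance]
      =ᵐ[bayesP ν φ] fun ω => g (T ω.2) := by
  have : MeasurableSingletonClass (Equiv.Perm (Fin n)) := ⟨fun _ => trivial⟩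
  have hTω : Measurable fun ω : Equiv.Perm (Fin n) × (Fin n → 𝓨) => T ω.2 :=
    hT.comp measurable_snd
  have : IsFiniteMeasure (bayesP ν φ) := by
    have : (n.factorial : ℝ≥0∞)⁻¹ ≠ ∞ := by simp [Nat.factorial_ne_zero]
    exact Measure.smul_finite _ this
  have hp : Measurable fun ω : Equiv.Perm (Fin n) × (Fin n → 𝓨) =>
      if p ω.1 then (1 : ℝ) else 0 :=
    (measurable_from_top (f := fun π => if p π then (1 : ℝ) else 0)).comp measurable_fst
  have hgi : Integrable (fun ω => g (T ω.2)) (bayesP ν φ) :=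
    Integrable.of_bound (hg.comp hTω).aestronglyMeasurable 1
      (.of_forall fun ω => by rw [Real.norm_of_nonneg (hg0 _)]; exact hg1 _)
  have hpi : Integrable (fun ω => if p ω.1 then (1 : ℝ) else 0) (bayesP ν φ) :=
    Integrable.of_bound hp.aestronglyMeasurable 1 (.of_forall fun ω => by split_ifs <;> simp)
  refine (ae_eq_condExp_of_forall_setIntegral_eq hTω.comap_le hpi
    (fun _ _ _ => hgi.integrableOn) ?_ ?_).symm
  · rintro _ ⟨B, hB, rfl⟩ -
    rw [integral_eq_lintegral_of_nonneg_ae (.of_forall fun ω => hg0 _)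
        (hg.comp hTω).aestronglyMeasurable,
      integral_eq_lintegral_of_nonneg_ae (.of_forall fun ω => by
        simp only [Pi.zero_apply]; split_ifs <;> simp) hp.aestronglyMeasurable]
    congr 1
    rw [← lintegral_indicator (hTω hB), ← lintegral_indicator (hTω hB)]
    have h1 := lintegral_bayesP_s10 ν φ hT lam d hd hmap
      (fun _ => B.indicator fun e => ENNReal.ofReal (g e)) fun _ => hg.ennreal_ofReal.indicator hB
    have h2 := lintegral_bayesP_s10 ν φ hT lam d hd hmap
      (fun π => B.indicator fun _ => ENNReal.ofReal (if p π then 1 else 0))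
      fun _ => measurable_const.indicator hB
    refine h1.trans (Eq.trans ?_ h2.symm)
    congr 2
    ext e
    by_cases he : e ∈ B
    · simp only [Set.indicator_of_mem he]
      rw [← Finset.sum_mul, ← ENNReal.ofReal_sum_of_nonneg fun π _ => hd0 π e,
        ← ENNReal.ofReal_mul (Finset.sum_nonneg fun π _ => hd0 π e), mul_comm, hgd,
        ENNReal.ofReal_sum_of_nonneg fun π _ => by split_ifs <;> simp [hd0]]
      refine Finset.sum_congr rfl fun π _ => ?_
      split_ifs <;> simp
    · simp [Set.indicator_of_notMem he]
  · exact (hg.comp (comap_measurable _)).aestronglyMeasurable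

/-- The preimage `π⁻¹(A)` of a fixed set under a uniform permutation is uniform among the subsets of
size `A.card`: any two of them differ by a permutation, so all fibres of `π ↦ π⁻¹(A)` have the same
cardinality `c`. The value of `c` plays no role, as it cancels in posterior ratios. -/
theorem sum_perm_preimage {n : ℕ} (A : Finset (Fin n)) :
    ∃ c : ℕ, ∀ G : Finset (Fin n) → ℝ,
      ∑ π : Equiv.Perm (Fin n), G (Finset.univ.filter fun i => π i ∈ A)
        = c * ∑ S ∈ Finset.univ.powersetCard A.card, G S := by
  classical
  have hcard : ∀ π : Equiv.Perm (Fin n), (Finset.univ.filter fun i => π i ∈ A).card = A.card := by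
    intro π
    exact Finset.card_bij (fun i _ => π i) (by simp) (fun a _ b _ h => π.injective h)
      fun b hb => ⟨π.symm b, by simpa using hb, by simp⟩
  refine ⟨(Finset.univ.filter fun π : Equiv.Perm (Fin n) =>
    (Finset.univ.filter fun i => π i ∈ A) = A).card, fun G => ?_⟩
  rw [← Finset.sum_fiberwise_of_maps_to (s := Finset.univ) (t := Finset.univ.powersetCard A.card)
    (g := fun π : Equiv.Perm (Fin n) => Finset.univ.filter fun i => π i ∈ A)
    (fun π _ => by simp [Finset.mem_powersetCard, hcard]), Finset.mul_sum]
  refine Finset.sum_congr rfl fun S hS => ?_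
  rw [Finset.sum_congr rfl fun π hπ => by rw [(Finset.mem_filter.1 hπ).2], Finset.sum_const,
    nsmul_eq_mul]
  congr 2
  have hSA : S.card = A.card := (Finset.mem_powersetCard.1 hS).2
  let e : {x // x ∈ S} ≃ {x // x ∈ A} := Finset.equivOfCardEq hSA
  have hτ : ∀ i, e.extendSubtype i ∈ A ↔ i ∈ S := fun i =>
    ⟨fun h => by_contra fun h' => e.extendSubtype_not_mem i h' h, e.extendSubtype_mem i⟩
  refine Finset.card_equiv (Equiv.mulRight e.extendSubtype⁻¹) fun π => ?_
  simp only [Finset.mem_filter, Finset.mem_univ, true_and, Equiv.coe_mulRight, Finset.ext_iff,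
    Equiv.Perm.mul_apply]
  constructor
  · intro h i
    rw [h, ← hτ]; simp
  · intro h i
    have := h (e.extendSubtype i)
    rw [hτ] at this
    simpa using this

/-- For a uniform permutation `π`, the value `π i0` is uniform: averaging over `i0` does not change
the sum, because `π ↦ π * swap i0 j` is a bijection. -/
theorem sum_perm_apply {n : ℕ} (hn : n ≠ 0) (i0 : Fin n) (F : Fin n → ℝ) :
    ∑ π : Equiv.Perm (Fin n), F (π i0) = (n.factorial / n : ℝ) * ∑ j, F j := by
  have h : ∀ j, ∑ π : Equiv.Perm (Fin n), F (π j) = ∑ π : Equiv.Perm (Fin n), F (π i0) := by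
    intro j
    refine Fintype.sum_equiv (Equiv.mulRight (Equiv.swap i0 j)) _ _ fun π => ?_
    simp
  have h2 : ∑ j, ∑ π : Equiv.Perm (Fin n), F (π j) = n.factorial * ∑ j, F j := by
    rw [Finset.sum_comm, Finset.sum_congr rfl fun π _ => Equiv.sum_comp π F]
    simp [Fintype.card_perm]
  simp only [h, Finset.sum_const, Finset.card_univ, Fintype.card_fin, nsmul_eq_mul] at h2
  have : (n : ℝ) ≠ 0 := by exact_mod_cast hn
  field_simp
  linarith

/-- A ratio `a' / (a' + b')` with weights proportional to `a`, `b` satisfies Bayes' identity, also when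
`a + b = 0`. -/
theorem posterior_aux {a b a' b' r c : ℝ} (hr : 0 < r) (ha : 0 ≤ a) (hb : 0 ≤ b)
    (ha' : a' = r * a) (hb' : b' = r * b) : a' / (a' + b') * (c * (a + b)) = c * a := by
  subst ha' hb'
  rcases (add_nonneg ha hb).eq_or_lt with h | h
  · have : a = 0 := by linarith
    simp [this]
  · rw [← mul_add, mul_div_mul_left _ _ hr.ne']
    field_simp

/-- Likelihood of the configurations of `K` ones with a one at `i0`: erasing `i0` leaves the
subsets of size `K - 1` that enter `fmix`. -/
theorem sum_powersetCard_mem {𝓨 : Type*} {n : ℕ} (f0 f1 : 𝓨 → ℝ) (i0 : Fin n) {K : ℕ}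
    (hK1 : 1 ≤ K) (hKn : K < n) (y : Fin n → 𝓨) :
    (∑ S ∈ (Finset.univ : Finset (Fin n)).powersetCard K, if i0 ∈ S then
        (∏ j ∈ S, f1 (y j)) * ∏ j ∈ Finset.univ \ S, f0 (y j) else 0)
      = (n - 1).choose (K - 1) * f1 (y i0) * fmix f0 f1 i0 (K - 1) y := by
  have hC : ((n - 1).choose (K - 1) : ℝ) ≠ 0 := by
    exact_mod_cast (Nat.choose_pos (by omega)).ne'
  rw [fmix, mul_right_comm, mul_inv_cancel_left₀ hC, mul_comm, Finset.mul_sum,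
    ← Finset.sum_filter]
  refine Finset.sum_bij' (fun S _ => S.erase i0) (fun S _ => insert i0 S) ?_ ?_ ?_ ?_ ?_
  · intro S hS
    simp only [Finset.mem_filter, Finset.mem_powersetCard] at hS
    simp [Finset.card_erase_of_mem hS.2, hS.1.2]
  · intro S hS
    simp only [Finset.mem_filter, Finset.mem_univ, true_and] at hS
    simp [Finset.card_insert_of_notMem hS.2, hS.1, Nat.sub_add_cancel hK1]
  · intro S hS
    exact Finset.insert_erase (Finset.mem_filter.1 hS).2
  · intro S hS
    exact Finset.erase_insert (Finset.mem_filter.1 hS).2.2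
  · intro S hS
    have h0 := (Finset.mem_filter.1 hS).2
    rw [← Finset.mul_prod_erase S _ h0, mul_assoc]
    congr 3
    ext j
    simp only [Finset.mem_sdiff, Finset.mem_univ, Finset.mem_erase]
    grind

/-- Likelihood of the configurations of `K` ones with a zero at `i0`. -/
theorem sum_powersetCard_notMem {𝓨 : Type*} {n : ℕ} (f0 f1 : 𝓨 → ℝ) (i0 : Fin n) {K : ℕ}
    (hKn : K < n) (y : Fin n → 𝓨) :
    (∑ S ∈ (Finset.univ : Finset (Fin n)).powersetCard K, if i0 ∈ S then 0 else
        (∏ j ∈ S, f1 (y j)) * ∏ j ∈ Finset.univ \ S, f0 (y j))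
      = (n - 1).choose K * f0 (y i0) * fmix f0 f1 i0 K y := by
  have hC : ((n - 1).choose K : ℝ) ≠ 0 := by
    exact_mod_cast (Nat.choose_pos (by omega)).ne'
  rw [fmix, mul_right_comm, mul_inv_cancel_left₀ hC, mul_comm, Finset.mul_sum]
  simp only [← ite_not (i0 ∈ _)]
  rw [← Finset.sum_filter]
  refine Finset.sum_congr (by ext S; simp) fun S hS => ?_
  have h0 : i0 ∉ S := (Finset.mem_filter.1 hS).2.2
  rw [← Finset.mul_prod_erase (Finset.univ \ S) _ (by simpa using h0 : i0 ∈ Finset.univ \ S),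
    Finset.erase_sdiff_comm]
  ring

/-- posterior odds formula in the two-valued model:  almost surely,
`P(M_1 = 1 | Y_{1:n}) = K f_1(Y_1) f_{K−1}(Y_{2:n}) / (K f_1(Y_1) f_{K−1}(Y_{2:n}) + (n−K) f_0(Y_1) f_K(Y_{2:n}))`
and `P(M_1 = 1 | Y_1) = K f_1(Y_1) / (K f_1(Y_1) + (n−K) f_0(Y_1))`. -/
theorem stmt_10 {𝓨 : Type*} [MeasurableSpace 𝓨] (ν : Measure 𝓨) [SigmaFinite ν]
    (n : ℕ) (hn : 2 ≤ n)
    (f0 f1 : 𝓨 → ℝ) (hf0_meas : Measurable f0) (hf1_meas : Measurable f1)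
    (hf0_nonneg : ∀ y, 0 ≤ f0 y) (hf1_nonneg : ∀ y, 0 ≤ f1 y)
    (hf0_prob : ∫⁻ y, ENNReal.ofReal (f0 y) ∂ν = 1)
    (hf1_prob : ∫⁻ y, ENNReal.ofReal (f1 y) ∂ν = 1)
    (μs : Fin n → ℝ) (hμ01 : ∀ i, μs i = 0 ∨ μs i = 1)
    (K : ℕ) (hKsum : (K : ℝ) = ∑ i, μs i) (hK1 : 1 ≤ K) (hK2 : K ≤ n - 1)
    (i0 : Fin n) (hi0 : (i0 : ℕ) = 0) :
    ((bayesP ν (fun j y => if μs j = 1 then f1 y else f0 y))[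
        (fun ω => if μs (ω.1 i0) = 1 then (1 : ℝ) else 0)| sigmaY 𝓨 n]
      =ᵐ[bayesP ν (fun j y => if μs j = 1 then f1 y else f0 y)]
      fun ω =>
        (K * f1 (ω.2 i0) * fmix f0 f1 i0 (K - 1) ω.2) /
          (K * f1 (ω.2 i0) * fmix f0 f1 i0 (K - 1) ω.2
            + ((n : ℝ) - (K : ℝ)) * f0 (ω.2 i0) * fmix f0 f1 i0 K ω.2))
    ∧ ((bayesP ν (fun j y => if μs j = 1 then f1 y else f0 y))[
        (fun ω => if μs (ω.1 i0) = 1 then (1 : ℝ) else 0)| sigmaYi 𝓨 i0]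
      =ᵐ[bayesP ν (fun j y => if μs j = 1 then f1 y else f0 y)]
      fun ω =>
        (K * f1 (ω.2 i0)) /
          (K * f1 (ω.2 i0) + ((n : ℝ) - (K : ℝ)) * f0 (ω.2 i0))) := by
  classical
  have hKn : K < n := by omega
  have hKnR : (0 : ℝ) ≤ n - K := by
    have : (K : ℝ) ≤ n := by exact_mod_cast hKn.le
    linarith
  set φ : Fin n → 𝓨 → ℝ := fun j y => if μs j = 1 then f1 y else f0 y with hφ
  have hφm : ∀ j, Measurable (φ j) := fun j => by
    simp only [hφ]; split_ifs <;> assumption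
  have hφ0 : ∀ j y, 0 ≤ φ j y := fun j y => by
    simp only [hφ]; split_ifs; exacts [hf1_nonneg y, hf0_nonneg y]
  have hφp : ∀ j, IsProbabilityMeasure (ν.withDensity fun y => ENNReal.ofReal (φ j y)) :=
    fun j => ⟨by
      rw [withDensity_apply _ MeasurableSet.univ, Measure.restrict_univ]
      simp only [hφ]
      split_ifs <;> assumption⟩
  have : ∀ π : Equiv.Perm (Fin n), IsProbabilityMeasure (prodDens ν fun i => φ (π i)) :=
    fun π => by unfold prodDens; infer_instance
  set A : Finset (Fin n) := Finset.univ.filter fun j => μs j = 1 with hA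
  have hAcard : A.card = K := by
    have : (A.card : ℝ) = K := by
      rw [hKsum, hA, Finset.card_filter]
      push_cast
      refine Finset.sum_congr rfl fun i _ => ?_
      rcases hμ01 i with h | h <;> simp [h]
    exact_mod_cast this
  have hfm : ∀ k, Measurable (fmix (n := n) f0 f1 i0 k) := fun k => by
    unfold fmix; fun_prop
  have hfm0 : ∀ k y, 0 ≤ fmix (n := n) f0 f1 i0 k y := fun k y =>
    mul_nonneg (by positivity) (Finset.sum_nonneg fun S _ =>
      mul_nonneg (Finset.prod_nonneg fun _ _ => hf1_nonneg _)
        (Finset.prod_nonneg fun _ _ => hf0_nonneg _))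
  constructor
  · obtain ⟨c, hc⟩ := sum_perm_preimage A
    rw [hAcard] at hc
    have hW : ∀ (π : Equiv.Perm (Fin n)) (y : Fin n → 𝓨), ∏ i, φ (π i) (y i)
        = (∏ j ∈ Finset.univ.filter (fun i => π i ∈ A), f1 (y j)) *
          ∏ j ∈ Finset.univ \ Finset.univ.filter (fun i => π i ∈ A), f0 (y j) := by
      intro π y
      simp only [hφ, hA, Finset.mem_filter, Finset.mem_univ, true_and, Finset.prod_ite]
      rw [← Finset.compl_eq_univ_sdiff, Finset.compl_filter]
    have ha : ∀ y : Fin n → 𝓨, 0 ≤ (K : ℝ) * f1 (y i0) * fmix f0 f1 i0 (K - 1) y := fun y =>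
      mul_nonneg (mul_nonneg (Nat.cast_nonneg _) (hf1_nonneg _)) (hfm0 _ _)
    have hb : ∀ y : Fin n → 𝓨, 0 ≤ ((n : ℝ) - K) * f0 (y i0) * fmix f0 f1 i0 K y := fun y =>
      mul_nonneg (mul_nonneg hKnR (hf0_nonneg _)) (hfm0 _ _)
    refine condExp_bayesP ν φ measurable_id (Measure.pi fun _ => ν)
      (fun π y => ∏ i, φ (π i) (y i))
      (fun π => Finset.measurable_prod _ fun i _ => (hφm _).comp (measurable_pi_apply i))
      (fun π y => Finset.prod_nonneg fun i _ => hφ0 _ _) (fun π => ?_)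
      (fun π => μs (π i0) = 1)
      (fun y => (K * f1 (y i0) * fmix f0 f1 i0 (K - 1) y) /
          (K * f1 (y i0) * fmix f0 f1 i0 (K - 1) y
            + ((n : ℝ) - (K : ℝ)) * f0 (y i0) * fmix f0 f1 i0 K y))
      (by have := hfm K; have := hfm (K - 1); fun_prop)
      (fun y => div_nonneg (ha y) (add_nonneg (ha y) (hb y)))
      (fun y => div_le_one_of_le₀ (le_add_of_nonneg_right (hb y)) (add_nonneg (ha y) (hb y)))
      fun y => ?_
    · rw [Measure.map_id]
      exact prodDens_eq_withDensity ν _ (fun i => hφm _) fun i y => hφ0 _ _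
    · have hin := sum_powersetCard_mem f0 f1 i0 hK1 hKn y
      have hout := sum_powersetCard_notMem f0 f1 i0 hKn y
      set W : Finset (Fin n) → ℝ := fun S =>
        (∏ j ∈ S, f1 (y j)) * ∏ j ∈ Finset.univ \ S, f0 (y j) with hWdef
      have hN : (∑ π : Equiv.Perm (Fin n), if μs (π i0) = 1 then ∏ i, φ (π i) (y i) else 0)
          = c * ∑ S ∈ Finset.univ.powersetCard K, if i0 ∈ S then W S else 0 := by
        rw [← hc]
        refine Finset.sum_congr rfl fun π _ => ?_
        rw [hW]
        simp [hA, hWdef]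
      have hD : (∑ π : Equiv.Perm (Fin n), ∏ i, φ (π i) (y i))
          = c * ((∑ S ∈ Finset.univ.powersetCard K, if i0 ∈ S then W S else 0)
            + ∑ S ∈ Finset.univ.powersetCard K, if i0 ∈ S then 0 else W S) := by
        rw [← Finset.sum_add_distrib, ← hc]
        refine Finset.sum_congr rfl fun π _ => ?_
        rw [hW]
        split_ifs <;> simp [hWdef]
      rw [hN, hD, hin, hout]
      have hchoose : (n - 1).choose K * K = (n - 1).choose (K - 1) * (n - K) := by
        have := Nat.choose_succ_right_eq (n - 1) (K - 1)
        rwa [Nat.sub_add_cancel hK1, show n - 1 - (K - 1) = n - K by omega] at this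
      have hchR : ((n - 1).choose K : ℝ) * K = (n - 1).choose (K - 1) * (n - K) := by
        have := congrArg (Nat.cast (R := ℝ)) hchoose
        push_cast [hKn.le] at this
        exact this
      have hC : (0 : ℝ) < (n - 1).choose (K - 1) := by
        exact_mod_cast Nat.choose_pos (by omega)
      -- the weights `K` and `n - K` are proportional to the two binomial coefficients
      refine posterior_aux (r := K / (n - 1).choose (K - 1)) ?_ ?_ ?_ ?_ ?_
      · have : (0 : ℝ) < K := by exact_mod_cast hK1
        positivity
      · exact mul_nonneg (mul_nonneg hC.le (hf1_nonneg _)) (hfm0 _ _)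
      · exact mul_nonneg (mul_nonneg (Nat.cast_nonneg _) (hf0_nonneg _)) (hfm0 _ _)
      · field_simp
      · field_simp
        linear_combination (-(f0 (y i0) * fmix f0 f1 i0 K y)) * hchR
  · have hcount : ∀ x z : ℝ, (∑ j, if μs j = 1 then x else z) = K * x + ((n : ℝ) - K) * z := by
      intro x z
      rw [Finset.sum_ite, Finset.sum_const, Finset.sum_const, nsmul_eq_mul, nsmul_eq_mul,
        ← Finset.compl_filter, Finset.card_compl, Fintype.card_fin, ← hA, hAcard,
        Nat.cast_sub hKn.le]
    have ha : ∀ y, 0 ≤ (K : ℝ) * f1 y := fun y => mul_nonneg (Nat.cast_nonneg _) (hf1_nonneg _)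
    have hb : ∀ y, 0 ≤ ((n : ℝ) - K) * f0 y := fun y => mul_nonneg hKnR (hf0_nonneg _)
    refine condExp_bayesP ν φ (measurable_pi_apply i0) ν (fun π y => φ (π i0) y)
      (fun π => hφm _) (fun π y => hφ0 _ _)
      (fun π => (measurePreserving_eval
        (fun i => ν.withDensity fun y => ENNReal.ofReal (φ (π i) y)) i0).map_eq)
      (fun π => μs (π i0) = 1)
      (fun y => (K * f1 y) / (K * f1 y + ((n : ℝ) - (K : ℝ)) * f0 y))
      (by fun_prop)
      (fun y => div_nonneg (ha y) (add_nonneg (ha y) (hb y)))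
      (fun y => div_le_one_of_le₀ (le_add_of_nonneg_right (hb y)) (add_nonneg (ha y) (hb y)))
      fun y => ?_
    rw [sum_perm_apply (by omega) i0 fun j => φ j y,
      sum_perm_apply (by omega) i0 fun j => if μs j = 1 then φ j y else 0]
    have h2 : (∑ j, if μs j = 1 then φ j y else 0) = K * f1 y := by
      rw [← add_zero ((K : ℝ) * f1 y), ← mul_zero ((n : ℝ) - K), ← hcount]
      refine Finset.sum_congr rfl fun j _ => ?_
      split_ifs with h <;> simp [hφ, h]
    rw [h2, hcount]
    exact posterior_aux one_pos (ha y) (hb y) (one_mul _).symm (one_mul _).symm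
end
end

section
/- Weighted-mean perturbation inequality: let a_1,…,a_n ∈ ℝ, let p_1,…,p_n ≥ 0 with Σ p_i = 1, and let c_1,…,c_n > 0; define q_i = p_i c_i / Σ_j p_j c_j. Then |Σ_{i=1}^n a_i q_i − Σ_{i=1}^n a_i p_i| ≤ (max_i a_i − min_i a_i) · (max_i c_i / min_i c_i − 1). -/
/-!
Since both `p` and `q` sum to one, subtracting the constant `min a` from `a` changes nothing, so
with `S = ∑ p_j c_j` the difference of means is `∑ (a_i - min a) p_i (c_i - S) / S`.
As an average of the `c_i`, `S` lies in `[min c, max c]`, so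
`|c_i - S| / S ≤ (max c - min c) / min c = max c / min c - 1`; averaging over `p` gives the bound.
-/

/-- weighted-mean perturbation inequality.  For weights `p_i ≥ 0` summing
to one, positive `c_i`, and `q_i = p_i c_i / Σ_j p_j c_j`,
`|Σ a_i q_i − Σ a_i p_i| ≤ (max a − min a) (max c / min c − 1)`. -/
theorem stmt_16 (n : ℕ) (hn : 0 < n) (a p c : Fin n → ℝ)
    (hp_nonneg : ∀ i, 0 ≤ p i) (hp_sum : ∑ i, p i = 1) (hc_pos : ∀ i, 0 < c i)
    (q : Fin n → ℝ) (hq : ∀ i, q i = p i * c i / ∑ j, p j * c j) :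
    |∑ i, a i * q i - ∑ i, a i * p i|
      ≤ (Finset.univ.sup' (Finset.univ_nonempty_iff.mpr (Fin.pos_iff_nonempty.mp hn)) a
          - Finset.univ.inf' (Finset.univ_nonempty_iff.mpr (Fin.pos_iff_nonempty.mp hn)) a)
        * (Finset.univ.sup' (Finset.univ_nonempty_iff.mpr (Fin.pos_iff_nonempty.mp hn)) c
            / Finset.univ.inf' (Finset.univ_nonempty_iff.mpr (Fin.pos_iff_nonempty.mp hn)) c
          - 1) := by
  have hne := Finset.univ_nonempty_iff.mpr (Fin.pos_iff_nonempty.mp hn)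
  have ha1 : ∀ i, a i ≤ Finset.univ.sup' hne a := fun i => Finset.le_sup' a (Finset.mem_univ i)
  have ha0 : ∀ i, Finset.univ.inf' hne a ≤ a i := fun i => Finset.inf'_le a (Finset.mem_univ i)
  have hc1 : ∀ i, c i ≤ Finset.univ.sup' hne c := fun i => Finset.le_sup' c (Finset.mem_univ i)
  have hc0 : ∀ i, Finset.univ.inf' hne c ≤ c i := fun i => Finset.inf'_le c (Finset.mem_univ i)
  have hm : 0 < Finset.univ.inf' hne c := (Finset.lt_inf'_iff hne).mpr fun i _ => hc_pos i
  generalize Finset.univ.sup' _ a = A at *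
  generalize Finset.univ.inf' _ a = B at *
  generalize Finset.univ.sup' _ c = M at *
  generalize Finset.univ.inf' _ c = m at *
  obtain ⟨S, hS⟩ : ∃ S, S = ∑ j, p j * c j := ⟨_, rfl⟩
  rw [← hS] at hq
  have hmS : m ≤ S := by
    calc m = ∑ j, p j * m := by rw [← Finset.sum_mul, hp_sum, one_mul]
      _ ≤ S := hS ▸ Finset.sum_le_sum fun j _ => mul_le_mul_of_nonneg_left (hc0 j) (hp_nonneg j)
  have hSM : S ≤ M := by
    calc S ≤ ∑ j, p j * M :=
          hS ▸ Finset.sum_le_sum fun j _ => mul_le_mul_of_nonneg_left (hc1 j) (hp_nonneg j)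
      _ = M := by rw [← Finset.sum_mul, hp_sum, one_mul]
  have hS0 : 0 < S := hm.trans_le hmS
  have hq_sum : ∑ i, q i = 1 := by
    simp_rw [hq]
    rw [← Finset.sum_div, ← hS, div_self hS0.ne']
  have key : ∑ i, a i * q i - ∑ i, a i * p i = ∑ i, p i * ((a i - B) * ((c i - S) / S)) := by
    have h1 : ∀ i, p i * ((a i - B) * ((c i - S) / S))
        = a i * q i - a i * p i - (B * q i - B * p i) := by
      intro i
      rw [hq]
      field_simp
    simp_rw [h1, Finset.sum_sub_distrib, ← Finset.mul_sum, hq_sum, hp_sum]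
    ring
  have hdev : ∀ i, |(c i - S) / S| ≤ M / m - 1 := by
    intro i
    have h1 : M / m - 1 = (M - m) / m := by field_simp
    rw [h1, abs_div, abs_of_pos hS0]
    have h2 : |c i - S| ≤ M - m := abs_le.mpr ⟨by linarith [hc0 i], by linarith [hc1 i]⟩
    exact div_le_div₀ (by linarith) h2 hm hmS
  rw [key]
  calc |∑ i, p i * ((a i - B) * ((c i - S) / S))|
      ≤ ∑ i, |p i * ((a i - B) * ((c i - S) / S))| := Finset.abs_sum_le_sum_abs _ _
    _ ≤ ∑ i, p i * ((A - B) * (M / m - 1)) := by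
        refine Finset.sum_le_sum fun i _ => ?_
        rw [abs_mul, abs_mul, abs_of_nonneg (hp_nonneg i), abs_of_nonneg (sub_nonneg.mpr (ha0 i))]
        refine mul_le_mul_of_nonneg_left ?_ (hp_nonneg i)
        exact mul_le_mul (by linarith [ha1 i]) (hdev i) (abs_nonneg _)
          (by linarith [ha0 i, ha1 i])
    _ = (A - B) * (M / m - 1) := by rw [← Finset.sum_mul, hp_sum, one_mul]
end
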